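/- arXiv:1503.07211 — 6 statements merged into one kernel-verified Lean document; each statement's English description precedes it below -/
import Mathlib

section
/- Let k ≥ 1 and n ≥ 1, and let m be a natural number with m ≥ 2^{k-1}(2^n − 1). Then there exists a Markov kernel R in the closure of F_{m,n} such that the set of compositions R ∘ Q, as Q ranges over the closure of F_{k,m}, equals the whole set Δ_{k,n} of Markov kernels from {0,1}^k to distributions on {0,1}^n. (Universal approximation with fixed second-layer weights.) -/
open Finset

/-- The logistic sigmoid function `σ(a) = 1/(1+exp(-a))`. -/
noncomputable def sigmoid (a : ℝ) : ℝ := 1 / (1 + Real.exp (-a))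

/-- Real value of a bit. -/
def bval (b : Bool) : ℝ := if b then 1 else 0

/-- The set `F_{k,m}` of Markov kernels representable by a feedforward layer of `m`
sigmoid stochastic units with `k` binary inputs. -/
noncomputable def Fset (k m : ℕ) : Set ((Fin k → Bool) → (Fin m → Bool) → ℝ) :=
  {P | ∃ (V : Fin m → Fin k → ℝ) (c : Fin m → ℝ), ∀ y z,
    P y z = ∏ j, (if z j then sigmoid ((∑ i, V j i * bval (y i)) + c j)
                  else 1 - sigmoid ((∑ i, V j i * bval (y i)) + c j))}

/-- `Δ_{k,n}`: all Markov kernels from `{0,1}^k` to distributions on `{0,1}^n`. -/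
def markovKernels (k n : ℕ) : Set ((Fin k → Bool) → (Fin n → Bool) → ℝ) :=
  {P | (∀ y x, 0 ≤ P y x) ∧ ∀ y, ∑ x, P y x = 1}

/-- Composition of Markov kernels: `(R ∘ Q)(x|y) = ∑_z Q(z|y) R(x|z)`. -/
noncomputable def kcomp {k m n : ℕ} (R : (Fin m → Bool) → (Fin n → Bool) → ℝ)
    (Q : (Fin k → Bool) → (Fin m → Bool) → ℝ) : (Fin k → Bool) → (Fin n → Bool) → ℝ :=
  fun y x => ∑ z, Q y z * R z x

/-- `Δ_n`: probability distributions on `{0,1}^n`. -/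
def simplex (n : ℕ) : Set ((Fin n → Bool) → ℝ) :=
  {p | (∀ x, 0 ≤ p x) ∧ ∑ x, p x = 1}

/-- `Δ_n^+`: strictly positive probability distributions on `{0,1}^n`. -/
def simplexPos (n : ℕ) : Set ((Fin n → Bool) → ℝ) :=
  {p | (∀ x, 0 < p x) ∧ ∑ x, p x = 1}

/-- Mixture `p^⊤ R` of the rows of a kernel `R` with weights `p`. -/
noncomputable def mix {m n : ℕ} (p : (Fin m → Bool) → ℝ)
    (R : (Fin m → Bool) → (Fin n → Bool) → ℝ) : (Fin n → Bool) → ℝ :=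
  fun x => ∑ z, p z * R z x

/-- `E_m`: strictly positive product distributions on `{0,1}^m`, where the `j`-th bit
is `0` with probability `q j ∈ (0,1)`. -/
def Eset (m : ℕ) : Set ((Fin m → Bool) → ℝ) :=
  {p | ∃ q : Fin m → ℝ, (∀ j, q j ∈ Set.Ioo (0:ℝ) 1) ∧
    ∀ z, p z = ∏ j, (if z j then 1 - q j else q j)}

/-- Integer value of a binary vector (bit `i` has weight `2^i`). -/
def intval {k : ℕ} (y : Fin k → Bool) : ℕ := ∑ i, if y i then 2 ^ (i : ℕ) else 0

/-- `l(z)`: position (1-based) of the largest nonzero entry of `z`, and `0` if `z = 0`. -/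
def lidx {N : ℕ} (z : Fin N → Bool) : ℕ :=
  (Finset.univ.filter (fun j => z j = true)).sup (fun j => (j : ℕ) + 1)

/-- `bin_n(l)`: the `n`-bit binary representation of `l`. -/
def binVec (n l : ℕ) : Fin n → Bool := fun i => Nat.testBit l (i : ℕ)

/-- Point measure at `x ∈ {0,1}^n`. -/
noncomputable def deltaAt {n : ℕ} (x : Fin n → Bool) : (Fin n → Bool) → ℝ :=
  fun x' => if x' = x then 1 else 0

theorem sig_eq (a : ℝ) : sigmoid a = Real.sigmoid a := by
  simp [sigmoid, Real.sigmoid_def]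

/-- single-unit functions -/
def unitSet (k : ℕ) : Set ((Fin k → Bool) → ℝ) :=
  {g | ∃ (v : Fin k → ℝ) (c : ℝ), ∀ y, g y = sigmoid ((∑ i, v i * bval (y i)) + c)}

def layer {k m : ℕ} (g : Fin m → (Fin k → Bool) → ℝ) : (Fin k → Bool) → (Fin m → Bool) → ℝ :=
  fun y z => ∏ j, (if z j then g j y else 1 - g j y)

theorem layer_mem {k m : ℕ} (g : Fin m → (Fin k → Bool) → ℝ)
    (h : ∀ j, g j ∈ closure (unitSet k)) : layer g ∈ closure (Fset k m) := by
  have hc : Continuous (layer : (Fin m → (Fin k → Bool) → ℝ) → _) := by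
    refine continuous_pi fun y => continuous_pi fun z => ?_
    unfold layer
    refine continuous_finsetProd _ fun j _ => ?_
    split_ifs <;> fun_prop
  have hg : g ∈ closure (Set.pi Set.univ fun _ : Fin m => unitSet k) := by
    rw [closure_pi_set]
    intro j _
    exact h j
  refine map_mem_closure hc hg ?_
  intro f hf
  choose v c hvc using fun j => hf j (Set.mem_univ j)
  refine ⟨v, c, fun y z => ?_⟩
  simp [layer, hvc]

theorem threshold_mem {k : ℕ} (v : Fin k → ℝ) (c : ℝ) :
    (fun y : Fin k → Bool => if 0 < (∑ i, v i * bval (y i)) + c then (1:ℝ) else 0)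
      ∈ closure (unitSet k) := by
  have ht : Filter.Tendsto (fun (t : ℝ) (y : Fin k → Bool) =>
      sigmoid (t * (t * ((∑ i, v i * bval (y i)) + c) + (-1)))) Filter.atTop
      (nhds (fun y : Fin k → Bool => if 0 < (∑ i, v i * bval (y i)) + c then (1:ℝ) else 0)) := by
    rw [tendsto_pi_nhds]
    intro y
    simp only [sig_eq]
    split_ifs with h
    · exact Real.tendsto_sigmoid_atTop.comp (Filter.tendsto_id.atTop_mul_atTop₀
        (Filter.tendsto_atTop_add_const_right _ _ (Filter.tendsto_id.atTop_mul_const h)))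
    · refine Real.tendsto_sigmoid_atBot.comp
        (Filter.tendsto_atBot_mono' _ ?_ Filter.tendsto_neg_atTop_atBot)
      filter_upwards [Filter.eventually_ge_atTop 0] with t ht
      have := mul_nonneg ht (mul_nonneg ht (sub_nonneg.2 (not_lt.1 h)))
      nlinarith
  refine mem_closure_of_tendsto ht (Filter.Eventually.of_forall fun t => ?_)
  refine ⟨fun i => t * t * v i, t * t * c - t, fun y => ?_⟩
  simp only [mul_assoc, ← Finset.mul_sum]
  congr 1
  ring

theorem edge_mem_open {k : ℕ} (τ : Fin k → Bool) (p0 p1 : ℝ) (h0 : p0 ∈ Set.Ioo (0:ℝ) 1)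
    (h1 : p1 ∈ Set.Ioo (0:ℝ) 1) :
    (fun y : Fin (k+1) → Bool => if Fin.tail y = τ then (if y 0 then p1 else p0) else 0)
      ∈ closure (unitSet (k+1)) := by
  rw [← Real.range_sigmoid] at h0 h1
  obtain ⟨α, rfl⟩ := h0
  obtain ⟨β, rfl⟩ := h1
  have ht : Filter.Tendsto (fun (t : ℝ) (y : Fin (k+1) → Bool) =>
      sigmoid (t * (- ∑ i, (if y i.succ = τ i then (0:ℝ) else 1)) + (α + (β - α) * bval (y 0))))
      Filter.atTop
      (nhds (fun y : Fin (k+1) → Bool => if Fin.tail y = τ then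
        (if y 0 then Real.sigmoid β else Real.sigmoid α) else 0)) := by
    rw [tendsto_pi_nhds]
    intro y
    simp only [sig_eq]
    by_cases h : Fin.tail y = τ
    · have : ∀ i, y i.succ = τ i := fun i => congrFun h i
      cases hy : y 0 <;> simp [h, this, bval]
    · rw [if_neg h]
      have hneg : (- ∑ i, (if y i.succ = τ i then (0:ℝ) else 1)) < 0 := by
        obtain ⟨i, hi⟩ := Function.ne_iff.1 h
        have : (0:ℝ) < ∑ i, (if y i.succ = τ i then (0:ℝ) else 1) := by
          refine Finset.sum_pos' (fun i _ => by split_ifs <;> norm_num) ⟨i, Finset.mem_univ _, ?_⟩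
          have hi' : y i.succ ≠ τ i := hi
          rw [if_neg hi']; norm_num
        linarith
      exact Real.tendsto_sigmoid_atBot.comp
        (Filter.tendsto_atBot_add_const_right _ _ (Filter.tendsto_id.atTop_mul_const_of_neg hneg))
  refine mem_closure_of_tendsto ht (Filter.Eventually.of_forall fun t => ?_)
  refine ⟨Fin.cons (β - α) fun i => if τ i then t else -t,
    α - t * ∑ i, bval (τ i), fun y => ?_⟩
  congr 1
  rw [Fin.sum_univ_succ]
  simp only [Fin.cons_zero, Fin.cons_succ]
  have : ∑ i, (if τ i then t else -t) * bval (y i.succ) = t * (- ∑ i, (if y i.succ = τ i then (0:ℝ) else 1)) + t * ∑ i, bval (τ i) := by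
    rw [← mul_add, ← Finset.sum_neg_distrib, ← Finset.sum_add_distrib, Finset.mul_sum]
    refine Finset.sum_congr rfl fun i _ => ?_
    cases τ i <;> cases y i.succ <;> simp [bval]
  rw [this]; ring_nf

theorem edge_mem {k : ℕ} (τ : Fin k → Bool) (p0 p1 : ℝ) (h0 : p0 ∈ Set.Icc (0:ℝ) 1)
    (h1 : p1 ∈ Set.Icc (0:ℝ) 1) :
    (fun y : Fin (k+1) → Bool => if Fin.tail y = τ then (if y 0 then p1 else p0) else 0)
      ∈ closure (unitSet (k+1)) := by
  have hc : Continuous (fun (p : ℝ × ℝ) (y : Fin (k+1) → Bool) =>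
      if Fin.tail y = τ then (if y 0 then p.2 else p.1) else 0) := by
    refine continuous_pi fun y => ?_
    split_ifs <;> fun_prop
  have hp : (p0, p1) ∈ closure (Set.Ioo (0:ℝ) 1 ×ˢ Set.Ioo (0:ℝ) 1) := by
    rw [closure_prod_eq, closure_Ioo (by norm_num)]
    exact ⟨h0, h1⟩
  have := map_mem_closure (t := closure (unitSet (k+1))) hc hp
    (fun p hp => edge_mem_open τ p.1 p.2 hp.1 hp.2)
  rwa [closure_closure] at this

theorem sum_prod_bool {m : ℕ} (f : Fin m → Bool → ℝ) :
    ∑ z : Fin m → Bool, ∏ j, f j (z j) = ∏ j, (f j true + f j false) := by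
  have := Finset.prod_univ_sum (fun _ : Fin m => (Finset.univ : Finset Bool)) f
  simp only [Fintype.piFinset_univ, Fintype.sum_bool] at this
  exact this.symm

theorem closure_sub (k m : ℕ) : closure (Fset k m) ⊆ markovKernels k m := by
  refine closure_minimal ?_ ?_
  · rintro P ⟨V, c, h⟩
    refine ⟨fun y z => ?_, fun y => ?_⟩
    · rw [h]
      refine Finset.prod_nonneg fun j _ => ?_
      rw [sig_eq]
      split_ifs
      · exact Real.sigmoid_nonneg _
      · linarith [Real.sigmoid_le_one ((∑ i, V j i * bval (y i)) + c j)]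
    · simp only [h]
      rw [sum_prod_bool (fun j b => if b then sigmoid ((∑ i, V j i * bval (y i)) + c j)
                  else 1 - sigmoid ((∑ i, V j i * bval (y i)) + c j))]
      simp
  · have : markovKernels k m = (⋂ y, ⋂ x, {P | 0 ≤ P y x}) ∩ ⋂ y, {P | ∑ x, P y x = 1} := by
      ext P; simp [markovKernels]
    rw [this]
    refine IsClosed.inter ?_ ?_
    · refine isClosed_iInter fun y => isClosed_iInter fun x => isClosed_le (by fun_prop) (by fun_prop)
    · refine isClosed_iInter fun y => isClosed_eq (by fun_prop) (by fun_prop)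

theorem kcomp_markov {k m n : ℕ} {R : (Fin m → Bool) → (Fin n → Bool) → ℝ}
    {Q : (Fin k → Bool) → (Fin m → Bool) → ℝ} (hR : R ∈ markovKernels m n)
    (hQ : Q ∈ markovKernels k m) : kcomp R Q ∈ markovKernels k n := by
  refine ⟨fun y x => Finset.sum_nonneg fun z _ => mul_nonneg (hQ.1 _ _) (hR.1 _ _), fun y => ?_⟩
  unfold kcomp
  rw [Finset.sum_comm]
  simp [← Finset.mul_sum, hR.2, hQ.2]

theorem stick (p : ℕ → ℝ) (hp : ∀ l, 0 ≤ p l) (l M : ℕ) (hM : l ≤ M) :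
    (∏ i ∈ Finset.range M,
      (if i + 1 = l then p (i+1) / ∑ a ∈ Finset.range (i+1+1), p a else
        if l < i + 1 then 1 - p (i+1) / ∑ a ∈ Finset.range (i+1+1), p a else 1))
      * ∑ a ∈ Finset.range (M+1), p a = p l := by
  have key : ∀ i, p i / (∑ a ∈ Finset.range (i+1), p a) * (∑ a ∈ Finset.range (i+1), p a) = p i := by
    intro i
    by_cases h : ∑ a ∈ Finset.range (i+1), p a = 0
    · have := (Finset.sum_eq_zero_iff_of_nonneg (fun a _ => hp a)).1 h i (by simp)
      simp [this]
    · field_simp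
  induction M, hM using Nat.le_induction with
  | base =>
    cases l with
    | zero => simp
    | succ l =>
      rw [Finset.prod_range_succ, Finset.prod_eq_one, one_mul, if_pos rfl, key]
      intro i hi
      have := Finset.mem_range.1 hi
      rw [if_neg (by omega), if_neg (by omega)]
  | succ M hM ih =>
    rw [Finset.prod_range_succ, if_neg (by omega), if_pos (by omega), mul_assoc, sub_mul, key,
      Finset.sum_range_succ _ (M+1), one_mul, add_sub_cancel_right, ih]

theorem dom_bound (s : ℕ → ℝ) (hs : ∀ l, s l = 1 ∨ s l = -1) (u : ℕ → Bool) (L : ℕ) :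
    |∑ l ∈ Finset.range L, s l * 2 ^ l * bval (u l)| ≤ 2 ^ L - 1 := by
  induction L with
  | zero => simp
  | succ L ih =>
    rw [Finset.sum_range_succ]
    refine (abs_add_le _ _).trans ?_
    have : |s L * 2 ^ L * bval (u L)| ≤ 2 ^ L := by
      rcases hs L with h | h <;> cases u L <;> simp [h, bval]
    rw [pow_succ]; linarith

theorem dom_sign (s : ℕ → ℝ) (hs : ∀ l, s l = 1 ∨ s l = -1) (u : ℕ → Bool) (N L : ℕ)
    (hL : L ≤ N) (huL : u L = true) (hu : ∀ l, L < l → l ≤ N → u l = false) :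
    0 < s L * ∑ l ∈ Finset.range (N+1), s l * 2 ^ l * bval (u l) := by
  have h1 : ∑ l ∈ Finset.range (N+1), s l * 2 ^ l * bval (u l)
      = ∑ l ∈ Finset.range (L+1), s l * 2 ^ l * bval (u l) := by
    symm
    refine Finset.sum_subset (by intro a; simp; omega) fun l hl hl' => ?_
    simp at hl hl'
    rw [hu l (by omega) (by omega)]; simp [bval]
  rw [h1, Finset.sum_range_succ, huL]
  have := abs_le.1 (dom_bound s hs u L)
  generalize ∑ l ∈ Finset.range L, s l * 2 ^ l * bval (u l) = S at *
  have : (0:ℝ) < 2 ^ L := by positivity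
  rcases hs L with h | h <;> simp only [h, bval, if_true] <;> linarith

theorem block_prod {N m b : ℕ} (hN : 0 < N) (hb : b * N + N ≤ m) (F : Fin m → ℝ) (G : ℕ → ℝ)
    (h1 : ∀ j : Fin m, (j : ℕ) / N ≠ b → F j = 1)
    (h2 : ∀ j : Fin m, (j : ℕ) / N = b → F j = G ((j : ℕ) % N)) :
    ∏ j, F j = ∏ i ∈ Finset.range N, G i := by
  rw [← Fin.prod_univ_eq_prod_range]
  symm
  refine Fintype.prod_of_injective (fun i : Fin N => (⟨b * N + i, by omega⟩ : Fin m)) ?_ _ _ ?_ ?_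
  · intro i j h
    simp only [Fin.mk.injEq] at h
    exact Fin.ext (by omega)
  · intro j hj
    refine h1 j fun hjb => hj ⟨⟨(j : ℕ) % N, Nat.mod_lt _ hN⟩, ?_⟩
    apply Fin.ext
    have := Nat.div_add_mod' (j : ℕ) N
    rw [hjb] at this
    exact this
  · intro i
    rw [h2]
    · simp [Nat.mod_eq_of_lt i.2]
    · simp only
      rw [mul_comm, Nat.mul_add_div hN, Nat.div_eq_of_lt i.2, add_zero]

theorem block_sum {N m b : ℕ} (hN : 0 < N) (hb : b * N + N ≤ m) (F : Fin m → ℝ) (G : ℕ → ℝ)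
    (h1 : ∀ j : Fin m, (j : ℕ) / N ≠ b → F j = 0)
    (h2 : ∀ j : Fin m, (j : ℕ) / N = b → F j = G ((j : ℕ) % N)) :
    ∑ j, F j = ∑ i ∈ Finset.range N, G i := by
  rw [← Fin.sum_univ_eq_sum_range]
  symm
  refine Fintype.sum_of_injective (fun i : Fin N => (⟨b * N + i, by omega⟩ : Fin m)) ?_ _ _ ?_ ?_
  · intro i j h
    simp only [Fin.mk.injEq] at h
    exact Fin.ext (by omega)
  · intro j hj
    refine h1 j fun hjb => hj ⟨⟨(j : ℕ) % N, Nat.mod_lt _ hN⟩, ?_⟩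
    apply Fin.ext
    have := Nat.div_add_mod' (j : ℕ) N
    rw [hjb] at this
    exact this
  · intro i
    rw [h2]
    · simp [Nat.mod_eq_of_lt i.2]
    · simp only
      rw [mul_comm, Nat.mul_add_div hN, Nat.div_eq_of_lt i.2, add_zero]

/-- sign of bit `i` of the `l`-th output vector -/
noncomputable def sgn {n : ℕ} (E : ℕ → Fin n → Bool) (i : Fin n) (l : ℕ) : ℝ :=
  if E l i then 1 else -1

theorem sgn_or {n : ℕ} (E : ℕ → Fin n → Bool) (i : Fin n) (l : ℕ) :
    sgn E i l = 1 ∨ sgn E i l = -1 := by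
  unfold sgn; split_ifs <;> simp

/-- the second-layer units -/
noncomputable def gR (m N : ℕ) {n : ℕ} (E : ℕ → Fin n → Bool) (i : Fin n) (z : Fin m → Bool) : ℝ :=
  if 0 < (∑ j : Fin m, (sgn E i ((j : ℕ) % N + 1) * 2 ^ ((j : ℕ) % N + 1)) * bval (z j))
    + sgn E i 0 then 1 else 0

theorem layer_gR_mem (m N : ℕ) {n : ℕ} (E : ℕ → Fin n → Bool) :
    layer (gR m N E) ∈ closure (Fset m n) := by
  refine layer_mem _ fun i => ?_
  exact threshold_mem _ _

theorem gR_eval {m N n b : ℕ} (hN : 0 < N) (hb : b * N + N ≤ m) (E : ℕ → Fin n → Bool)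
    (z : Fin m → Bool) (hz : ∀ j : Fin m, (j : ℕ) / N ≠ b → z j = false)
    (u : ℕ → Bool) (hu0 : u 0 = true)
    (hu : ∀ j : Fin m, (j : ℕ) / N = b → u ((j : ℕ) % N + 1) = z j)
    (L : ℕ) (hL : L ≤ N) (huL : u L = true) (hul : ∀ l, L < l → l ≤ N → u l = false)
    (i : Fin n) : gR m N E i z = if E L i then 1 else 0 := by
  have h1 : (∑ j : Fin m, (sgn E i ((j : ℕ) % N + 1) * 2 ^ ((j : ℕ) % N + 1)) * bval (z j))
    + sgn E i 0 = ∑ l ∈ Finset.range (N+1), sgn E i l * 2 ^ l * bval (u l) := by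
    rw [Finset.sum_range_succ', hu0]
    congr 1
    · refine block_sum (b := b) hN hb _
        (fun l => sgn E i (l+1) * 2 ^ (l+1) * bval (u (l+1))) ?_ ?_
      · intro j hj
        simp [hz j hj, bval]
      · intro j hj
        simp only [hu j hj]
    · simp [bval]
  have h2 := dom_sign (sgn E i) (sgn_or E i) u N L hL huL hul
  unfold gR
  rw [h1]
  unfold sgn at h2 ⊢
  by_cases hE : E L i = true
  · rw [if_pos hE] at h2 ⊢
    rw [one_mul] at h2
    rw [if_pos h2]
  · rw [if_neg hE] at h2 ⊢
    rw [if_neg]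
    linarith

theorem layer_eq_delta {m n : ℕ} (g : Fin n → (Fin m → Bool) → ℝ) (z : Fin m → Bool)
    (w : Fin n → Bool) (h : ∀ i, g i z = if w i then 1 else 0) (x : Fin n → Bool) :
    layer g z x = if x = w then 1 else 0 := by
  unfold layer
  have : ∀ i, (if x i then g i z else 1 - g i z) = if x i = w i then 1 else 0 := by
    intro i
    rw [h]
    cases x i <;> cases w i <;> simp
  simp only [this]
  rw [Finset.prod_ite_zero]
  simp [funext_iff]

theorem R_eval {m N n b : ℕ} (hN : 0 < N) (hb : b * N + N ≤ m) (E : ℕ → Fin n → Bool)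
    (hE : ∀ l l', l ≤ N → l' ≤ N → E l = E l' → l = l')
    (z : Fin m → Bool) (hz : ∀ j : Fin m, (j : ℕ) / N ≠ b → z j = false)
    (l : ℕ) (hl : l ≤ N) :
    layer (gR m N E) z (E l) = if ∀ j : Fin m, (j : ℕ) / N = b →
      ((j : ℕ) % N + 1 = l → z j = true) ∧ (l < (j : ℕ) % N + 1 → z j = false) then 1 else 0 := by
  obtain ⟨u, hu0, hu, hu'⟩ : ∃ u : ℕ → Bool, u 0 = true ∧
      (∀ j : Fin m, (j : ℕ) / N = b → u ((j : ℕ) % N + 1) = z j) ∧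
      (∀ i, i < N → ∃ j : Fin m, (j : ℕ) / N = b ∧ (j : ℕ) % N = i) := by
    refine ⟨fun l => match l with
      | 0 => true
      | l + 1 => if h : b * N + l < m then z ⟨b * N + l, h⟩ else false, rfl, ?_, ?_⟩
    · intro j hj
      have := Nat.div_add_mod' (j : ℕ) N
      rw [hj] at this
      simp only [this, j.2, dite_true]
    · intro i hi
      refine ⟨⟨b * N + i, by omega⟩, ?_, ?_⟩
      · simp only
        rw [mul_comm, Nat.mul_add_div hN, Nat.div_eq_of_lt hi, add_zero]
      · simp [Nat.mod_eq_of_lt hi]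
  obtain ⟨L, hL, huL, hul⟩ : ∃ L, L ≤ N ∧ u L = true ∧ ∀ l, L < l → l ≤ N → u l = false := by
    refine ⟨Nat.findGreatest (fun l => u l = true) N, Nat.findGreatest_le _, ?_, ?_⟩
    · exact Nat.findGreatest_spec (P := fun l => u l = true) (Nat.zero_le N) hu0
    · intro l h1 h2
      simpa using Nat.findGreatest_is_greatest h1 h2
  rw [layer_eq_delta (gR m N E) z (E L)
    (fun i => gR_eval hN hb E z hz u hu0 hu L hL huL hul i)]
  refine if_congr ?_ rfl rfl
  constructor
  · intro h
    have : l = L := hE _ _ hl hL h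
    subst this
    intro j hj
    rw [← hu j hj]
    refine ⟨fun h => by rw [h, huL], fun h => hul _ h (Nat.mod_lt _ hN)⟩
  · intro h
    congr 1
    by_contra hne
    rcases lt_or_gt_of_ne hne with h1 | h1
    · obtain ⟨L', rfl⟩ : ∃ L', L = L' + 1 := ⟨L - 1, by omega⟩
      obtain ⟨j, hj, hj'⟩ := hu' L' (by omega)
      have h3 := (h j hj).2 (by omega)
      rw [← hu j hj, hj', huL] at h3
      simp at h3
    · obtain ⟨l', rfl⟩ : ∃ l', l = l' + 1 := ⟨l - 1, by omega⟩
      obtain ⟨j, hj, hj'⟩ := hu' l' (by omega)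
      have h3 := (h j hj).1 (by omega)
      rw [← hu j hj, hj', hul _ h1 hl] at h3
      simp at h3

theorem core {m N n b : ℕ} (hN : 0 < N) (hb : b * N + N ≤ m) (E : ℕ → Fin n → Bool)
    (hE : ∀ l l', l ≤ N → l' ≤ N → E l = E l' → l = l') (q : ℕ → ℝ) (l : ℕ) (hl : l ≤ N) :
    ∑ z : Fin m → Bool, (∏ j : Fin m, if z j then (if (j : ℕ) / N = b then q ((j : ℕ) % N + 1) else 0)
      else 1 - (if (j : ℕ) / N = b then q ((j : ℕ) % N + 1) else 0)) * layer (gR m N E) z (E l)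
    = ∏ i ∈ Finset.range N,
      (if i + 1 = l then q (i+1) else if l < i + 1 then 1 - q (i+1) else 1) := by
  have h1 : ∀ z : Fin m → Bool,
      (∏ j : Fin m, if z j then (if (j : ℕ) / N = b then q ((j : ℕ) % N + 1) else 0)
      else 1 - (if (j : ℕ) / N = b then q ((j : ℕ) % N + 1) else 0)) * layer (gR m N E) z (E l)
      = ∏ j : Fin m, ((fun (j : Fin m) (c : Bool) =>
        (if c then (if (j : ℕ) / N = b then q ((j : ℕ) % N + 1) else 0)
      else 1 - (if (j : ℕ) / N = b then q ((j : ℕ) % N + 1) else 0)) *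
        (if (j : ℕ) / N = b →
      ((j : ℕ) % N + 1 = l → c = true) ∧ (l < (j : ℕ) % N + 1 → c = false) then (1:ℝ) else 0))
        j (z j)) := by
    intro z
    simp only
    rw [Finset.prod_mul_distrib]
    by_cases hz : ∀ j : Fin m, (j : ℕ) / N ≠ b → z j = false
    · congr 1
      rw [R_eval hN hb E hE z hz l hl, Finset.prod_ite_zero]
      simp
    · push Not at hz
      obtain ⟨j, hj, hzj⟩ := hz
      rw [Finset.prod_eq_zero (Finset.mem_univ j), zero_mul, zero_mul]
      simp only [ne_eq, Bool.not_eq_false] at hzj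
      simp [hj, hzj]
  refine (Finset.sum_congr rfl fun z _ => h1 z).trans ((sum_prod_bool (fun (j : Fin m) (c : Bool) =>
        (if c then (if (j : ℕ) / N = b then q ((j : ℕ) % N + 1) else 0)
      else 1 - (if (j : ℕ) / N = b then q ((j : ℕ) % N + 1) else 0)) *
        (if (j : ℕ) / N = b →
      ((j : ℕ) % N + 1 = l → c = true) ∧ (l < (j : ℕ) % N + 1 → c = false) then (1:ℝ) else 0))).trans ?_)
  refine block_prod (b := b) hN hb _ (fun i =>
    (if i + 1 = l then q (i+1) else if l < i + 1 then 1 - q (i+1) else 1)) ?_ ?_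
  · intro j hj
    simp [hj]
  · intro j hj
    simp only [hj, if_true, true_implies]
    by_cases h1 : (j : ℕ) % N + 1 = l
    · simp [h1]
    · by_cases h2 : l < (j : ℕ) % N + 1
      · simp [h1, h2]
      · simp [h1, h2]

theorem universal_approximation_fixed_second_layer
    (k n m : ℕ) (hk : 1 ≤ k) (hn : 1 ≤ n)
    (hm : 2 ^ (k - 1) * (2 ^ n - 1) ≤ m) :
    ∃ R ∈ closure (Fset m n),
      (fun Q => kcomp R Q) '' closure (Fset k m) = markovKernels k n := by
  obtain ⟨k, rfl⟩ : ∃ k', k = k' + 1 := ⟨k - 1, by omega⟩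
  rw [Nat.add_sub_cancel] at hm
  have h2n : 2 ≤ 2 ^ n := by
    calc 2 = 2 ^ 1 := rfl
      _ ≤ 2 ^ n := Nat.pow_le_pow_right (by norm_num) hn
  obtain ⟨N, hNdef⟩ : ∃ N, N = 2 ^ n - 1 := ⟨_, rfl⟩
  rw [← hNdef] at hm
  have hN : 0 < N := by omega
  have hN1 : 2 ^ n = N + 1 := by omega
  let e : (Fin n → Bool) ≃ Fin (N + 1) := Fintype.equivFinOfCardEq (by simp [hN1])
  let T : (Fin k → Bool) ≃ Fin (2 ^ k) := Fintype.equivFinOfCardEq (by simp)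
  let E : ℕ → Fin n → Bool := fun l => e.symm (Fin.ofNat (N + 1) l)
  have hE : ∀ l l', l ≤ N → l' ≤ N → E l = E l' → l = l' := by
    intro l l' hl hl' h
    have := congrArg Fin.val (e.symm.injective h)
    simpa [Fin.ofNat, Nat.mod_eq_of_lt (Nat.lt_succ_of_le hl),
      Nat.mod_eq_of_lt (Nat.lt_succ_of_le hl')] using this
  have hEs : ∀ x, ∃ l, l ≤ N ∧ E l = x := by
    intro x
    refine ⟨e x, Nat.le_of_lt_succ (e x).2, ?_⟩
    simp [E]
  refine ⟨layer (gR m N E), layer_gR_mem m N E, ?_⟩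
  apply Set.Subset.antisymm
  · rintro _ ⟨Q, hQ, rfl⟩
    exact kcomp_markov (closure_sub _ _ (layer_gR_mem m N E)) (closure_sub _ _ hQ)
  intro P hP
  let q : (Fin (k+1) → Bool) → ℕ → ℝ := fun y l =>
    P y (E l) / ∑ a ∈ Finset.range (l + 1), P y (E a)
  have hq : ∀ y l, q y l ∈ Set.Icc (0:ℝ) 1 := by
    intro y l
    have h0 : 0 ≤ ∑ a ∈ Finset.range (l + 1), P y (E a) := Finset.sum_nonneg fun a _ => hP.1 _ _
    refine ⟨div_nonneg (hP.1 _ _) h0, div_le_one_of_le₀ ?_ h0⟩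
    exact Finset.single_le_sum (f := fun a => P y (E a)) (fun a _ => hP.1 _ _) (by simp)
  have hsum : ∀ y, ∑ a ∈ Finset.range (N + 1), P y (E a) = 1 := by
    intro y
    rw [← hP.2 y, ← Fin.sum_univ_eq_sum_range (fun a => P y (E a)), ← Equiv.sum_comp e.symm]
    refine Finset.sum_congr rfl fun a _ => ?_
    simp [E]
  let g : Fin m → (Fin (k+1) → Bool) → ℝ := fun j y =>
    if (j : ℕ) / N = T (Fin.tail y) then q y ((j : ℕ) % N + 1) else 0
  refine ⟨layer g, layer_mem g fun j => ?_, ?_⟩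
  · by_cases hj : (j : ℕ) / N < 2 ^ k
    · convert edge_mem (T.symm ⟨_, hj⟩)
        (q (Fin.cons false (T.symm ⟨_, hj⟩)) ((j : ℕ) % N + 1))
        (q (Fin.cons true (T.symm ⟨_, hj⟩)) ((j : ℕ) % N + 1)) (hq _ _) (hq _ _) using 1
      funext y
      have hiff : (j : ℕ) / N = T (Fin.tail y) ↔ Fin.tail y = T.symm ⟨_, hj⟩ := by
        rw [Equiv.eq_symm_apply, Fin.ext_iff]
        exact eq_comm
      simp only [g, hiff]
      split_ifs with h1 h2
      · rw [← h1, ← h2, Fin.cons_self_tail]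
      · rw [← h1, ← Bool.eq_false_iff.2 h2, Fin.cons_self_tail]
      · rfl
    · convert edge_mem (fun _ : Fin k => false) 0 0 (by simp) (by simp) using 1
      funext y
      have : (j : ℕ) / N ≠ T (Fin.tail y) := by
        have := (T (Fin.tail y)).2
        omega
      simp [g, this]
  · funext y x
    obtain ⟨l, hl, rfl⟩ := hEs x
    have hb : (T (Fin.tail y) : ℕ) * N + N ≤ m := by
      refine le_trans ?_ hm
      have := Nat.mul_le_mul_right N (Nat.succ_le_of_lt (T (Fin.tail y)).2)
      rwa [Nat.succ_mul] at this
    have h1 := core hN hb E hE (q y) l hl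
    have h2 := stick (fun a => P y (E a)) (fun a => hP.1 _ _) l N hl
    rw [hsum, mul_one] at h2
    exact h1.trans h2
end

section
/- Let n ≥ 2 and let m be a natural number with m ≥ 2^n − 1. Then there exists a Markov kernel R in the closure of F_{m,n} such that the set { p^⊤R : p in the closure of E_m } equals the whole simplex Δ_n of probability distributions on {0,1}^n. -/
open Finset

/-- Position (1-based) of the last nonzero bit, by recursion. -/
def lastIdx : (m : ℕ) → (Fin m → Bool) → ℕ
  | 0, _ => 0
  | m + 1, z => if z (Fin.last m) then m + 1 else lastIdx m (fun i => z i.castSucc)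

lemma sum_snoc_split (m : ℕ) (f : (Fin (m + 1) → Bool) → ℝ) :
    ∑ z, f z = ∑ z : Fin m → Bool, (f (Fin.snoc z true) + f (Fin.snoc z false)) := by
  rw [← (Fin.snocEquiv (fun _ : Fin (m + 1) => Bool)).sum_comp, Fintype.sum_prod_type_right]
  refine Finset.sum_congr rfl fun z _ => ?_
  simp [Fin.snocEquiv]

lemma lastIdx_snoc (m : ℕ) (z : Fin m → Bool) (b : Bool) :
    lastIdx (m + 1) (Fin.snoc z b) = if b then m + 1 else lastIdx m z := by
  simp [lastIdx]

/-- Partial sums. -/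
noncomputable def psum (a : ℕ → ℝ) (l : ℕ) : ℝ := ∑ k ∈ Finset.range (l + 1), a k

noncomputable def qrat (a : ℕ → ℝ) (j : ℕ) : ℝ := psum a j / psum a (j + 1)

lemma psum_succ (a : ℕ → ℝ) (l : ℕ) : psum a (l + 1) = psum a l + a (l + 1) := by
  unfold psum
  rw [Finset.sum_range_succ]

lemma psum_nonneg (a : ℕ → ℝ) (ha : ∀ k, 0 ≤ a k) (l : ℕ) : 0 ≤ psum a l :=
  Finset.sum_nonneg fun k _ => ha k

lemma qrat_mul (a : ℕ → ℝ) (ha : ∀ k, 0 ≤ a k) (j : ℕ) :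
    qrat a j * psum a (j + 1) = psum a j := by
  unfold qrat
  by_cases h : psum a (j + 1) = 0
  · have h1 := psum_nonneg a ha j
    have h2 := psum_succ a j
    have h3 := ha (j + 1)
    rw [h]
    simp
    linarith
  · field_simp

lemma qrat_mem (a : ℕ → ℝ) (ha : ∀ k, 0 ≤ a k) (j : ℕ) : qrat a j ∈ Set.Icc (0 : ℝ) 1 := by
  have h1 := psum_nonneg a ha j
  have h2 := psum_succ a j
  have h3 := ha (j + 1)
  have h4 := psum_nonneg a ha (j + 1)
  exact ⟨div_nonneg h1 h4, div_le_one_of_le₀ (by linarith) h4⟩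

lemma push_sum (a : ℕ → ℝ) (ha : ∀ k, 0 ≤ a k) (φ : ℕ → ℝ) (m : ℕ) :
    (∑ z : Fin m → Bool, (∏ j, (if z j then 1 - qrat a j else qrat a j)) * φ (lastIdx m z))
      * psum a m = ∑ l ∈ Finset.range (m + 1), a l * φ l := by
  induction m with
  | zero => simp [lastIdx, psum, mul_comm]
  | succ m ih =>
    rw [sum_snoc_split, Finset.sum_range_succ, ← ih]
    have hone : ∑ z : Fin m → Bool, (∏ j, (if z j then 1 - qrat a j else qrat a j)) = 1 := by
      have := (Finset.prod_univ_sum (fun _ : Fin m => (Finset.univ : Finset Bool))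
        (fun j b => if b then 1 - qrat a j else qrat a j))
      rw [Fintype.piFinset_univ] at this
      rw [← this]
      simp
    simp only [lastIdx_snoc, Fin.prod_univ_castSucc, Fin.snoc_castSucc, Fin.snoc_last,
      Fin.val_castSucc, Fin.val_last, if_true, Bool.false_eq_true, if_false]
    rw [Finset.sum_add_distrib, ← Finset.sum_mul, ← Finset.sum_mul, hone]
    have e : ∀ z : Fin m → Bool, (∏ j, (if z j then 1 - qrat a j else qrat a j)) * qrat a m
        * φ (lastIdx m z) = ((∏ j, (if z j then 1 - qrat a j else qrat a j))
        * φ (lastIdx m z)) * qrat a m := fun z => by ring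
    simp only [e]
    rw [← Finset.sum_mul]
    generalize (∑ z : Fin m → Bool, (∏ j, (if z j then 1 - qrat a j else qrat a j))
        * φ (lastIdx m z)) = T
    have h1 := qrat_mul a ha m
    have h2 := psum_succ a m
    linear_combination (T - φ (m + 1)) * h1 + φ (m + 1) * h2

lemma lastIdx_sign_dominates (s : ℕ → ℝ) (hs : ∀ l, s l = 1 ∨ s l = -1) (m : ℕ) (z : Fin m → Bool) :
    |(∑ i : Fin m, s (i + 1) * 2 ^ ((i : ℕ) + 1) * bval (z i)) + s 0| ≤ 2 ^ (m + 1) - 1 ∧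
    1 ≤ s (lastIdx m z) * ((∑ i : Fin m, s (i + 1) * 2 ^ ((i : ℕ) + 1) * bval (z i)) + s 0) := by
  induction m with
  | zero => rcases hs 0 with h | h <;> simp [h, lastIdx] <;> norm_num
  | succ m ih =>
    obtain ⟨h1, h2⟩ := ih (fun i => z i.castSucc)
    rw [Fin.sum_univ_castSucc]
    simp only [lastIdx, Fin.val_castSucc, Fin.val_last]
    set A := ∑ i : Fin m, s (i + 1) * 2 ^ ((i : ℕ) + 1) * bval (z i.castSucc)
    have hp : (0 : ℝ) < 2 ^ (m + 1) := by positivity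
    have hp2 : (2 : ℝ) ^ (m + 1 + 1) = 2 * 2 ^ (m + 1) := by ring
    rw [hp2]
    rw [abs_le] at h1 ⊢
    cases hz : z (Fin.last m)
    · simp only [bval, Bool.false_eq_true, if_false, mul_zero, add_zero]
      exact ⟨⟨by linarith [h1.1], by linarith [h1.2]⟩, h2⟩
    · simp only [bval, if_true, mul_one]
      rcases hs (m + 1) with h | h <;> rw [h]
      · exact ⟨⟨by linarith [h1.1], by linarith [h1.2]⟩, by linarith [h1.1]⟩
      · exact ⟨⟨by linarith [h1.1], by linarith [h1.2]⟩, by linarith [h1.2]⟩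

open Filter Topology in
lemma sigmoid_top : Tendsto sigmoid atTop (𝓝 1) := by
  have h : Tendsto (fun a : ℝ => 1 / (1 + Real.exp (-a))) atTop (𝓝 (1 / (1 + 0))) :=
    tendsto_const_nhds.div (tendsto_const_nhds.add
      (Real.tendsto_exp_atBot.comp tendsto_neg_atTop_atBot)) (by norm_num)
  simpa [show sigmoid = fun a => 1 / (1 + Real.exp (-a)) from rfl] using h

open Filter Topology in
lemma sigmoid_bot : Tendsto sigmoid atBot (𝓝 0) := by
  have h : Tendsto (fun a : ℝ => (1 + Real.exp (-a))⁻¹) atBot (𝓝 0) :=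
    (tendsto_atTop_add_const_left _ 1
      (Real.tendsto_exp_atTop.comp tendsto_neg_atBot_atTop)).inv_tendsto_atTop
  simpa [show sigmoid = fun a => 1 / (1 + Real.exp (-a)) from rfl] using h

open Filter Topology in
lemma kernel_mem (m n : ℕ) (g : ℕ → Fin n → Bool) :
    (fun (z : Fin m → Bool) => deltaAt (g (lastIdx m z))) ∈ closure (Fset m n) := by
  let s : Fin n → ℕ → ℝ := fun j l => if g l j then 1 else -1
  have hs : ∀ j l, s j l = 1 ∨ s j l = -1 := by
    intro j l; by_cases h : g l j <;> simp [s, h]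
  let A : Fin n → (Fin m → Bool) → ℝ := fun j z =>
    (∑ i : Fin m, s j (i + 1) * 2 ^ ((i : ℕ) + 1) * bval (z i)) + s j 0
  let K : ℝ → (Fin m → Bool) → (Fin n → Bool) → ℝ := fun t z x =>
    ∏ j, (if x j then sigmoid (t * A j z) else 1 - sigmoid (t * A j z))
  refine mem_closure_of_tendsto (f := K) (b := atTop) ?_ (Eventually.of_forall fun t => ?_)
  · refine tendsto_pi_nhds.2 fun z => tendsto_pi_nhds.2 fun x => ?_
    have hd : deltaAt (g (lastIdx m z)) x
        = ∏ j, (if x j = g (lastIdx m z) j then (1 : ℝ) else 0) := by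
      rw [Finset.prod_ite_zero]
      simp [deltaAt, funext_iff]
    rw [hd]
    refine tendsto_finsetProd _ fun j _ => ?_
    have hA := (lastIdx_sign_dominates (s j) (hs j) m z).2
    change 1 ≤ s j (lastIdx m z) * A j z at hA
    have hσ : Tendsto (fun t : ℝ => sigmoid (t * A j z)) atTop
        (𝓝 (if g (lastIdx m z) j then 1 else 0)) := by
      cases hg : g (lastIdx m z) j
      · simp only [s, hg, Bool.false_eq_true, if_false] at hA ⊢
        exact sigmoid_bot.comp (tendsto_id.atTop_mul_const_of_neg (by linarith))
      · simp only [s, hg, if_true] at hA ⊢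
        exact sigmoid_top.comp (tendsto_id.atTop_mul_const (by linarith))
    have hσ' := hσ.const_sub 1
    cases hx : x j <;> cases hg : g (lastIdx m z) j <;> simp [hg] at hσ hσ' ⊢ <;> assumption
  · refine ⟨fun j i => t * (s j (i + 1) * 2 ^ ((i : ℕ) + 1)), fun j => t * s j 0, ?_⟩
    intro z x
    have : ∀ j, (∑ i : Fin m, t * (s j (i + 1) * 2 ^ ((i : ℕ) + 1)) * bval (z i)) + t * s j 0
        = t * A j z := by
      intro j
      simp only [A, mul_add, Finset.mul_sum, mul_assoc]
    simp only [this, K]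

lemma closure_E_of_Icc (m : ℕ) (q : Fin m → ℝ) (hq : ∀ j, q j ∈ Set.Icc (0 : ℝ) 1) :
    (fun z : Fin m → Bool => ∏ j, (if z j then 1 - q j else q j)) ∈ closure (Eset m) := by
  let f : (Fin m → ℝ) → (Fin m → Bool) → ℝ := fun q z => ∏ j, (if z j then 1 - q j else q j)
  have hf : Continuous f := by
    refine continuous_pi fun z => continuous_finsetProd _ fun j _ => ?_
    cases z j <;> simp <;> fun_prop
  have hmem : q ∈ closure (Set.pi Set.univ fun _ : Fin m => Set.Ioo (0 : ℝ) 1) := by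
    rw [closure_pi_set]
    intro j _
    simp only [closure_Ioo (zero_ne_one (α := ℝ))]
    exact hq j
  refine closure_mono ?_ (image_closure_subset_closure_image hf ⟨q, hmem, rfl⟩)
  rintro _ ⟨q', hq', rfl⟩
  exact ⟨q', fun j => hq' j (Set.mem_univ j), fun z => rfl⟩

lemma closure_E_simplex (m : ℕ) : closure (Eset m) ⊆ simplex m := by
  refine closure_minimal ?_ ?_
  · rintro p ⟨q, hq, hp⟩
    refine ⟨fun z => ?_, ?_⟩
    · rw [hp]
      refine Finset.prod_nonneg fun j _ => ?_
      have h1 := (hq j).1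
      have h2 := (hq j).2
      split_ifs <;> linarith
    · simp only [hp]
      have := (Finset.prod_univ_sum (fun _ : Fin m => (Finset.univ : Finset Bool))
        (fun j b => if b then 1 - q j else q j))
      rw [Fintype.piFinset_univ] at this
      rw [← this]
      simp
  · have h : simplex m = (⋂ x, {p | 0 ≤ p x}) ∩ {p | ∑ x, p x = 1} := by
      ext p; simp [simplex]
    rw [h]
    refine (isClosed_iInter fun x => isClosed_le continuous_const (continuous_apply x)).inter
      (isClosed_eq (by fun_prop) continuous_const)

/-- Proposition (no inputs, fixed second layer): for `n ≥ 2` and `m ≥ 2^n - 1` there is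
`R` in the closure of `F_{m,n}` with `{p^⊤R : p ∈ closure E_m} = Δ_n`. -/
theorem universal_approximation_distributions_fixed_second_layer
    (n m : ℕ) (hn : 2 ≤ n) (hm : 2 ^ n - 1 ≤ m) :
    ∃ R ∈ closure (Fset m n),
      (fun p => mix p R) '' closure (Eset m) = simplex n := by
  have e : Fin (2 ^ n) ≃ (Fin n → Bool) := Fintype.equivOfCardEq (by simp)
  let g : ℕ → Fin n → Bool := fun l => if h : l < 2 ^ n then e ⟨l, h⟩ else fun _ => false
  refine ⟨_, kernel_mem m n g, Set.Subset.antisymm ?_ ?_⟩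
  · rintro _ ⟨p, hp, rfl⟩
    obtain ⟨h0, h1⟩ := closure_E_simplex m hp
    refine ⟨fun x => Finset.sum_nonneg fun z _ => mul_nonneg (h0 z) ?_, ?_⟩
    · simp only [deltaAt]; split_ifs <;> norm_num
    · simp only [mix]
      rw [Finset.sum_comm, ← h1]
      refine Finset.sum_congr rfl fun z _ => ?_
      simp [deltaAt]
  · rintro p ⟨h0, h1⟩
    let a : ℕ → ℝ := fun l => if l < 2 ^ n then p (g l) else 0
    have ha : ∀ l, 0 ≤ a l := by
      intro l; simp only [a]; split_ifs
      · exact h0 _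
      · exact le_rfl
    have hpow : 0 < 2 ^ n := by positivity
    have key : ∀ ψ : (Fin n → Bool) → ℝ,
        ∑ l ∈ Finset.range (m + 1), a l * ψ (g l) = ∑ y, p y * ψ y := by
      intro ψ
      rw [← e.sum_comp]
      rw [← Finset.sum_subset (s₁ := Finset.range (2 ^ n))]
      · rw [Finset.sum_range]
        refine Finset.sum_congr rfl fun l _ => ?_
        simp [a, g]
      · intro l hl
        rw [Finset.mem_range] at hl ⊢
        omega
      · intro l _ hl
        rw [Finset.mem_range] at hl
        simp [a, hl]
    have hS : psum a m = 1 := by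
      have := key (fun _ => 1)
      simp only [mul_one] at this
      rw [psum, this, h1]
    refine ⟨_, closure_E_of_Icc m (fun j => qrat a j) (fun j => qrat_mem a ha j), ?_⟩
    funext x
    have h2 := push_sum a ha (fun l => deltaAt (g l) x) m
    rw [hS, mul_one, key (fun y => deltaAt y x)] at h2
    simp only [mix]
    rw [h2]
    simp [deltaAt]
end

section
/- Let n ≥ 2 and let m be a natural number with m ≥ 2^{n-1} − 1. Then the set { p^⊤R : p in the closure of E_m, R in the closure of F_{m,n} } equals the whole simplex Δ_n of probability distributions on {0,1}^n. -/
open Finset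

lemma sigmoid_cont : Continuous sigmoid := by
  unfold sigmoid
  refine Continuous.div continuous_const (by fun_prop) ?_
  intro x; positivity

lemma sigmoid_pos (a : ℝ) : 0 < sigmoid a := by unfold sigmoid; positivity

lemma sigmoid_lt_one (a : ℝ) : sigmoid a < 1 := by
  unfold sigmoid
  rw [div_lt_one (by positivity)]
  linarith [Real.exp_pos (-a)]

lemma sigmoid_top_s3 : Filter.Tendsto sigmoid Filter.atTop (nhds 1) := by
  unfold sigmoid
  have h : Filter.Tendsto (fun a : ℝ => 1 + Real.exp (-a)) Filter.atTop (nhds (1 + 0)) :=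
    tendsto_const_nhds.add (Real.tendsto_exp_neg_atTop_nhds_zero)
  have := (tendsto_const_nhds (x := (1:ℝ))).div h (by norm_num)
  rw [add_zero, div_one] at this
  exact this

lemma sigmoid_neg' (a : ℝ) : sigmoid (-a) = 1 - sigmoid a := by
  unfold sigmoid
  have h1 := Real.exp_pos a
  rw [neg_neg, Real.exp_neg]
  field_simp
  ring

lemma sigmoid_bot_s3 : Filter.Tendsto sigmoid Filter.atBot (nhds 0) := by
  have h := (sigmoid_top_s3.comp Filter.tendsto_neg_atBot_atTop)
  have h2 := (tendsto_const_nhds (x := (1:ℝ))).sub h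
  refine Filter.Tendsto.congr (fun x => ?_) (by simpa using h2)
  simp only [Function.comp, sigmoid_neg']; ring

/-- Affine form of a binary vector. -/
noncomputable def aff {m : ℕ} (v : Fin m → ℝ) (c : ℝ) (z : Fin m → Bool) : ℝ :=
  (∑ i, v i * bval (z i)) + c

/-- Bernoulli weight. -/
def bern (s : ℝ) (b : Bool) : ℝ := if b then s else 1 - s

/-- Product distribution. -/
def pd {m : ℕ} (q : Fin m → ℝ) (z : Fin m → Bool) : ℝ := ∏ j, (if z j then 1 - q j else q j)

lemma sum_prod_bern {m : ℕ} (s : Fin m → ℝ) : ∑ z : Fin m → Bool, ∏ j, bern (s j) (z j) = 1 := by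
  have h := Finset.prod_univ_sum (fun _ : Fin m => (Finset.univ : Finset Bool))
    (fun j b => bern (s j) b)
  rw [Fintype.piFinset_univ] at h
  rw [← h]
  simp [bern]

lemma sum_pd {m : ℕ} (q : Fin m → ℝ) : ∑ z, pd q z = 1 := by
  have h := sum_prod_bern (fun j => 1 - q j)
  rw [← h]
  refine Finset.sum_congr rfl fun z _ => ?_
  unfold pd bern
  simp

lemma sum_cons {m : ℕ} (f : (Fin (m+1) → Bool) → ℝ) :
    ∑ z, f z = (∑ z : Fin m → Bool, f (Fin.cons true z)) +
      ∑ z : Fin m → Bool, f (Fin.cons false z) := by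
  rw [← (Fin.consEquiv (fun _ => Bool)).sum_comp, Fintype.sum_prod_type, Fintype.sum_bool]
  rfl

lemma pd_cons {m : ℕ} (q : Fin m → ℝ) (q0 : ℝ) (b : Bool) (z : Fin m → Bool) :
    pd (Fin.cons q0 q) (Fin.cons b z : Fin (m+1) → Bool) = (if b then 1 - q0 else q0) * pd q z := by
  unfold pd
  rw [Fin.prod_univ_succ]
  simp

lemma aff_cons {m : ℕ} (v : Fin m → ℝ) (v0 c : ℝ) (b : Bool) (z : Fin m → Bool) :
    aff (Fin.cons v0 v) c (Fin.cons b z : Fin (m+1) → Bool) = v0 * bval b + aff v c z := by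
  unfold aff
  rw [Fin.sum_univ_succ]
  simp [add_assoc]

/-- Distribution on the edge over `x0`. -/
noncomputable def edge {k : ℕ} (x0 : Fin k → Bool) (r : ℝ) (x : Fin k → Bool) (b : Bool) : ℝ :=
  if x = x0 then bern r b else 0

/-- Distributions representable with `m` hidden units, `k` threshold outputs and one
sigmoid output. -/
def RepK (k m : ℕ) (Q : (Fin k → Bool) → Bool → ℝ) : Prop :=
  ∃ (q : Fin m → ℝ) (V : Fin k → Fin m → ℝ) (c : Fin k → ℝ) (u : Fin m → ℝ) (d : ℝ),
    (∀ j, q j ∈ Set.Ioo (0:ℝ) 1) ∧ (∀ j z, aff (V j) (c j) z ≠ 0) ∧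
    ∀ x b, Q x b = ∑ z, pd q z *
      edge (fun j => decide (0 < aff (V j) (c j) z)) (sigmoid (aff u d z)) x b

lemma avg_surj {m : ℕ} (q u : Fin m → ℝ) (d r : ℝ) (hr : r ∈ Set.Ioo (0:ℝ) 1) :
    ∃ v, ∑ z, pd q z * sigmoid (v + aff u d z) = r := by
  have hc : Continuous fun v => ∑ z, pd q z * sigmoid (v + aff u d z) := by
    refine continuous_finsetSum _ fun z _ => continuous_const.mul ?_
    exact sigmoid_cont.comp (by fun_prop)
  have ht : Filter.Tendsto (fun v => ∑ z, pd q z * sigmoid (v + aff u d z)) Filter.atTop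
      (nhds (∑ z, pd q z * 1)) := by
    refine tendsto_finsetSum _ fun z _ => tendsto_const_nhds.mul ?_
    exact sigmoid_top_s3.comp (Filter.tendsto_atTop_add_const_right _ _ Filter.tendsto_id)
  have hb : Filter.Tendsto (fun v => ∑ z, pd q z * sigmoid (v + aff u d z)) Filter.atBot
      (nhds (∑ z, pd q z * 0)) := by
    refine tendsto_finsetSum _ fun z _ => tendsto_const_nhds.mul ?_
    exact sigmoid_bot_s3.comp (Filter.tendsto_atBot_add_const_right _ _ Filter.tendsto_id)
  simp only [mul_one, sum_pd, mul_zero, Finset.sum_const_zero] at ht hb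
  obtain ⟨a, ha⟩ := (hb.eventually_lt_const hr.1).exists
  obtain ⟨b, hb⟩ := (ht.eventually_const_lt hr.2).exists
  exact mem_range_of_exists_le_of_exists_ge hc ⟨a, ha.le⟩ ⟨b, hb.le⟩

lemma rep_zero {k : ℕ} (x0 : Fin k → Bool) (r : ℝ) (hr : r ∈ Set.Ioo (0:ℝ) 1) :
    RepK k 0 (edge x0 r) := by
  obtain ⟨v, hv⟩ := avg_surj (m := 0) Fin.elim0 Fin.elim0 0 r hr
  refine ⟨Fin.elim0, fun _ => Fin.elim0, fun j => if x0 j then 1 else -1, Fin.elim0, v,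
    fun j => j.elim0, ?_, ?_⟩
  · intro j z
    simp only [aff, Finset.univ_eq_empty, Finset.sum_empty, zero_add]
    split_ifs <;> norm_num
  · intro x b
    simp [pd, aff] at hv
    have h : (fun j => decide (0 < if x0 j = true then (1:ℝ) else -1)) = x0 := by
      funext j
      cases x0 j <;> norm_num
    simp [pd, aff, hv, h]

lemma sum_edge_avg {k m : ℕ} (q : Fin m → ℝ) (x0 : Fin k → Bool) (s : (Fin m → Bool) → ℝ) (x b) :
    ∑ z, pd q z * edge x0 (s z) x b = edge x0 (∑ z, pd q z * s z) x b := by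
  unfold edge bern
  have h := sum_pd q
  split_ifs
  · rfl
  · simp only [mul_sub, mul_one, Finset.sum_sub_distrib, h]
  · simp

lemma rep_succ {k m : ℕ} (Q) (hQ : RepK k m Q) (x0 : Fin k → Bool) (r w : ℝ)
    (hr : r ∈ Set.Ioo (0:ℝ) 1) (hw : w ∈ Set.Ioo (0:ℝ) 1) :
    RepK k (m+1) (fun x b => w * edge x0 r x b + (1 - w) * Q x b) := by
  obtain ⟨q, V, c, u, d, hq, hne, hQ⟩ := hQ
  obtain ⟨v, hv⟩ := avg_surj q u d r hr
  obtain ⟨M, hM⟩ : ∃ M, ∀ jz : Fin k × (Fin m → Bool), |aff (V jz.1) (c jz.1) jz.2| ≤ M :=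
    Finite.exists_le _
  let s : Fin k → ℝ := fun j => if x0 j then M + 1 else -(M + 1)
  have hs1 : ∀ j z, aff (Fin.cons (s j) (V j)) (c j) (Fin.cons true z : Fin (m+1) → Bool) ≠ 0 ∧
      decide (0 < aff (Fin.cons (s j) (V j)) (c j) (Fin.cons true z : Fin (m+1) → Bool)) = x0 j := by
    intro j z
    have h := abs_le.1 (hM (j, z))
    simp only at h
    rw [aff_cons]
    cases hx : x0 j
    · have : s j * bval true + aff (V j) (c j) z < 0 := by simp [s, bval, hx]; linarith
      exact ⟨this.ne, by simpa using this.le⟩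
    · have : 0 < s j * bval true + aff (V j) (c j) z := by simp [s, bval, hx]; linarith
      exact ⟨this.ne', by simpa using this⟩
  have hs0 : ∀ j z, aff (Fin.cons (s j) (V j)) (c j) (Fin.cons false z : Fin (m+1) → Bool)
      = aff (V j) (c j) z := by
    intro j z
    rw [aff_cons]; simp [bval]
  refine ⟨Fin.cons (1 - w) q, fun j => Fin.cons (s j) (V j), c, Fin.cons v u, d, ?_, ?_, ?_⟩
  · intro j
    refine Fin.cases ?_ (fun i => ?_) j
    · simpa [and_comm] using hw
    · simpa using hq i
  · intro j z
    rw [← Fin.cons_self_tail z]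
    cases z 0
    · rw [hs0]; exact hne _ _
    · exact (hs1 _ _).1
  · intro x b
    rw [sum_cons]
    simp only [pd_cons, hs0, (hs1 _ _).2]
    simp only [aff_cons, mul_assoc, ← Finset.mul_sum]
    simp only [bval]
    rw [hQ, ← hv, ← sum_edge_avg]
    simp

lemma rep_sum {k : ℕ} : ∀ (m : ℕ) (e : Fin (m+1) → Fin k → Bool) (w r : Fin (m+1) → ℝ),
    (∀ l, 0 < w l) → ∑ l, w l = 1 → (∀ l, r l ∈ Set.Ioo (0:ℝ) 1) →
    RepK k m (fun x b => ∑ l, w l * edge (e l) (r l) x b)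
  | 0, e, w, r, hw, hs, hr => by
    simp only [zero_add, Fin.sum_univ_succ, Finset.univ_eq_empty, Finset.sum_empty, add_zero] at *
    rw [hs]
    simpa using rep_zero (e 0) (r 0) (hr 0)
  | m+1, e, w, r, hw, hs, hr => by
    rw [Fin.sum_univ_succ] at hs
    have hpos : 0 < ∑ i : Fin (m+1), w i.succ :=
      Finset.sum_pos (fun i _ => hw _) Finset.univ_nonempty
    have h1 : 0 < 1 - w 0 := by linarith
    have ih := rep_sum m (fun l => e l.succ) (fun l => w l.succ / (1 - w 0)) (fun l => r l.succ)
      (fun l => div_pos (hw _) h1) (by rw [← Finset.sum_div, div_eq_one_iff_eq h1.ne']; linarith)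
      (fun l => hr _)
    have := rep_succ _ ih (e 0) (r 0) (w 0) (hr 0) ⟨hw 0, by linarith⟩
    convert this using 3 with x b
    rw [Fin.sum_univ_succ, Finset.mul_sum]
    congr 1
    refine Finset.sum_congr rfl fun l _ => ?_
    field_simp

lemma rep_pos {k m : ℕ} (hm : 2 ^ k ≤ m + 1) (Q : (Fin k → Bool) → Bool → ℝ)
    (hQ : ∀ x b, 0 < Q x b) (hs : ∑ x, ∑ b, Q x b = 1) : RepK k m Q := by
  classical
  obtain ⟨e, he⟩ : ∃ e : Fin (m+1) → (Fin k → Bool), Function.Surjective e := by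
    have hcard : Fintype.card (Fin k → Bool) ≤ Fintype.card (Fin (m+1)) := by simpa using hm
    obtain ⟨f⟩ := Function.Embedding.nonempty_of_card_le hcard
    exact ⟨Function.invFun f, Function.invFun_surjective f.injective⟩
  let N : (Fin k → Bool) → ℝ := fun x => ((Finset.univ.filter fun l => e l = x).card : ℝ)
  have hN : ∀ x, 0 < N x := by
    intro x
    obtain ⟨l, hl⟩ := he x
    exact Nat.cast_pos.2 (Finset.card_pos.2 ⟨l, by simp [hl]⟩)
  have hfib : ∀ g : (Fin k → Bool) → ℝ, ∀ x, ∑ l with e l = x, g (e l) / N (e l) = g x := by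
    intro g x
    have h1 : ∑ l with e l = x, g (e l) / N (e l) = ∑ l with e l = x, g x / N x :=
      Finset.sum_congr rfl fun l hl => by rw [(Finset.mem_filter.1 hl).2]
    rw [h1, Finset.sum_const, nsmul_eq_mul]
    exact mul_div_cancel₀ _ (hN x).ne'
  let S : (Fin k → Bool) → ℝ := fun x => ∑ b, Q x b
  have hS : ∀ x, S x = Q x true + Q x false := fun x => by simp [S]
  have hSp : ∀ x, 0 < S x := fun x => by rw [hS]; linarith [hQ x true, hQ x false]
  have := rep_sum m e (fun l => S (e l) / N (e l)) (fun l => Q (e l) true / S (e l))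
    (fun l => div_pos (hSp _) (hN _))
    (by
      rw [← Finset.sum_fiberwise Finset.univ e, ← hs]
      exact Finset.sum_congr rfl fun x _ => hfib S x)
    (fun l => ⟨div_pos (hQ _ _) (hSp _), by
      rw [div_lt_one (hSp _), hS]; linarith [hQ (e l) false]⟩)
  convert this using 3 with x b
  rw [← hfib (fun x => Q x b) x, Finset.sum_filter]
  refine Finset.sum_congr rfl fun l _ => ?_
  unfold edge bern
  have h1 := (hSp (e l)).ne'
  have h2 := (hN (e l)).ne'
  by_cases h : e l = x
  · subst h
    cases b
    · simp only [if_true, Bool.false_eq_true, if_false]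
      field_simp
      rw [hS]; ring
    · simp only [if_true]
      field_simp
  · simp [h, Ne.symm h]

lemma Eset_sub (m : ℕ) : Eset m ⊆ stdSimplex ℝ (Fin m → Bool) := by
  rintro p ⟨q, hq, hp⟩
  have : p = pd q := funext hp
  subst this
  refine ⟨fun z => Finset.prod_nonneg fun j _ => ?_, sum_pd q⟩
  have := hq j
  split_ifs <;> linarith [this.1, this.2]

lemma Fset_sub (m n : ℕ) : Fset m n ⊆ Set.pi Set.univ fun _ => stdSimplex ℝ (Fin n → Bool) := by
  rintro P ⟨V, c, hP⟩ y _
  have : P y = fun z => ∏ j, bern (sigmoid (aff (V j) (c j) y)) (z j) := funext (hP y)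
  rw [this]
  refine ⟨fun z => Finset.prod_nonneg fun j _ => ?_, sum_prod_bern _⟩
  have h1 := sigmoid_pos (aff (V j) (c j) y)
  have h2 := sigmoid_lt_one (aff (V j) (c j) y)
  unfold bern
  split_ifs <;> linarith

lemma closE_sub (m : ℕ) : closure (Eset m) ⊆ stdSimplex ℝ (Fin m → Bool) :=
  closure_minimal (Eset_sub m) (isCompact_stdSimplex ℝ _).isClosed

lemma compF (m n : ℕ) :
    IsCompact (Set.pi Set.univ fun _ : Fin m → Bool => stdSimplex ℝ (Fin n → Bool)) :=
  isCompact_univ_pi fun _ => isCompact_stdSimplex ℝ _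

lemma closF_sub (m n : ℕ) :
    closure (Fset m n) ⊆ Set.pi Set.univ fun _ => stdSimplex ℝ (Fin n → Bool) :=
  closure_minimal (Fset_sub m n) (compF m n).isClosed

lemma lhs_closed (n m : ℕ) :
    IsClosed {q | ∃ p ∈ closure (Eset m), ∃ R ∈ closure (Fset m n), q = mix p R} := by
  have hE : IsCompact (closure (Eset m)) :=
    (isCompact_stdSimplex ℝ _).of_isClosed_subset isClosed_closure (closE_sub m)
  have hF : IsCompact (closure (Fset m n)) :=
    (compF m n).of_isClosed_subset isClosed_closure (closF_sub m n)
  have hc : Continuous fun pR : ((Fin m → Bool) → ℝ) × ((Fin m → Bool) → (Fin n → Bool) → ℝ) =>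
      mix pR.1 pR.2 := by
    unfold mix
    fun_prop
  have := ((hE.prod hF).image hc).isClosed
  convert this using 1
  ext q
  constructor
  · rintro ⟨p, hp, R, hR, rfl⟩
    exact ⟨(p, R), ⟨hp, hR⟩, rfl⟩
  · rintro ⟨⟨p, R⟩, ⟨hp, hR⟩, rfl⟩
    exact ⟨p, hp, R, hR, rfl⟩

lemma bern_tendsto (a : ℝ) (ha : a ≠ 0) (b : Bool) :
    Filter.Tendsto (fun t : ℝ => bern (sigmoid (t * a)) b) Filter.atTop
      (nhds (if b = decide (0 < a) then 1 else 0)) := by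
  rcases lt_or_gt_of_ne ha with h | h
  · have ht : Filter.Tendsto (fun t : ℝ => sigmoid (t * a)) Filter.atTop (nhds 0) :=
      sigmoid_bot_s3.comp (Filter.tendsto_id.atTop_mul_const_of_neg h)
    have : ¬ 0 < a := h.le.not_gt
    cases b
    · simpa [bern, this] using (tendsto_const_nhds (x := (1:ℝ))).sub ht
    · simpa [bern, this] using ht
  · have ht : Filter.Tendsto (fun t : ℝ => sigmoid (t * a)) Filter.atTop (nhds 1) :=
      sigmoid_top_s3.comp (Filter.tendsto_id.atTop_mul_const h)
    cases b
    · simpa [bern, h] using (tendsto_const_nhds (x := (1:ℝ))).sub ht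
    · simpa [bern, h] using ht

lemma pos_mem (k m : ℕ) (hm : 2 ^ k ≤ m + 1) (p : (Fin (k+1) → Bool) → ℝ)
    (hp : ∀ x, 0 < p x) (hs : ∑ x, p x = 1) :
    ∃ p' ∈ closure (Eset m), ∃ R ∈ closure (Fset m (k+1)), p = mix p' R := by
  obtain ⟨q, V, c, u, d, hq, hne, hQ⟩ := rep_pos hm (fun x b => p (Fin.cons b x))
    (fun x b => hp _) (by
      simp only [Fintype.sum_bool, Finset.sum_add_distrib]
      rw [← sum_cons]; exact hs)
  refine ⟨pd q, subset_closure ⟨q, hq, fun _ => rfl⟩,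
    fun z x => edge (fun j => decide (0 < aff (V j) (c j) z)) (sigmoid (aff u d z))
      (Fin.tail x) (x 0), ?_, ?_⟩
  · let F : ℝ → (Fin m → Bool) → (Fin (k+1) → Bool) → ℝ := fun t z x =>
      bern (sigmoid (aff u d z)) (x 0) * ∏ j, bern (sigmoid (t * aff (V j) (c j) z)) (x (Fin.succ j))
    refine mem_closure_of_tendsto (f := F) (b := Filter.atTop) ?_ (Filter.Eventually.of_forall ?_)
    · rw [tendsto_pi_nhds]
      intro z
      rw [tendsto_pi_nhds]
      intro x
      have h := (tendsto_const_nhds (x := bern (sigmoid (aff u d z)) (x 0))).mul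
        (tendsto_finsetProd Finset.univ fun j _ =>
          bern_tendsto (aff (V j) (c j) z) (hne j z) (x (Fin.succ j)))
      convert h using 2
      rw [Finset.prod_ite_zero]
      simp [edge, funext_iff, Fin.tail]
    · intro t
      refine ⟨Fin.cons u fun j i => t * V j i, Fin.cons d fun j => t * c j, fun z x => ?_⟩
      rw [Fin.prod_univ_succ]
      simp only [F, bern, aff, Fin.cons_zero, Fin.cons_succ, mul_add, Finset.mul_sum, mul_assoc]
  · funext x
    have := hQ (Fin.tail x) (x 0)
    simpa [mix, Fin.cons_self_tail] using this

/-- Proposition (no inputs, all weights free): for `n ≥ 2` and `m ≥ 2^(n-1) - 1`,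
`{p^⊤R : p ∈ closure E_m, R ∈ closure F_{m,n}} = Δ_n`. -/
theorem universal_approximation_distributions
    (n m : ℕ) (hn : 2 ≤ n) (hm : 2 ^ (n - 1) - 1 ≤ m) :
    {q | ∃ p ∈ closure (Eset m), ∃ R ∈ closure (Fset m n), q = mix p R} = simplex n := by
  obtain ⟨k, rfl⟩ : ∃ k, n = k + 1 := ⟨n - 1, by omega⟩
  have hm' : 2 ^ k ≤ m + 1 := by
    simp only [Nat.add_sub_cancel] at hm
    omega
  apply Set.Subset.antisymm
  · rintro _ ⟨p, hp, R, hR, rfl⟩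
    have h1 := closE_sub m hp
    have h2 : ∀ z, R z ∈ stdSimplex ℝ _ := fun z => closF_sub m _ hR z trivial
    refine ⟨fun x => Finset.sum_nonneg fun z _ => mul_nonneg (h1.1 z) ((h2 z).1 x), ?_⟩
    unfold mix
    rw [Finset.sum_comm]
    simp only [← Finset.mul_sum, (h2 _).2, mul_one, h1.2]
  · intro p hp
    let C : ℝ := (2:ℝ) ^ (k+1)
    have hC : 0 < C := by positivity
    let f : ℝ → (Fin (k+1) → Bool) → ℝ := fun t x => (1 - t) * p x + t * C⁻¹
    have hf : Filter.Tendsto f (nhdsWithin 0 (Set.Ioi 0)) (nhds p) := by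
      have hcont : Continuous f := by fun_prop
      have h0 : f 0 = p := by funext x; simp [f]
      have := hcont.tendsto 0
      rw [h0] at this
      exact this.mono_left nhdsWithin_le_nhds
    refine (lhs_closed (k+1) m).mem_of_tendsto hf ?_
    filter_upwards [Ioo_mem_nhdsGT (zero_lt_one (α := ℝ))] with t ht
    refine pos_mem k m hm' (f t) (fun x => ?_) ?_
    · have h1 : 0 ≤ (1 - t) * p x := mul_nonneg (by linarith [ht.2]) (hp.1 x)
      have h2 : 0 < t * C⁻¹ := mul_pos ht.1 (inv_pos.2 hC)
      simp only [f]; linarith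
    · simp only [f, Finset.sum_add_distrib, ← Finset.mul_sum, hp.2]
      simp [C]
end

section
/- Let k ≥ 1 and n ≥ 1. If there exists a Markov kernel R in the closure of F_{m,n} such that { R∘Q : Q in the closure of F_{k,m} } = Δ_{k,n}, then m ≥ ⌈2^k(2^n − 1)/(k+1)⌉. -/
open Finset

open MvPolynomial in
/-- Polynomials without zeros on the positive orthant. -/
def posMonoid (τ : Type) : Submonoid (MvPolynomial τ ℝ) where
  carrier := {p | ∀ t : τ → ℝ, (∀ i, 0 < t i) → aeval t p ≠ 0}
  one_mem' := by intro t _; simp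
  mul_mem' := by
    intro a b ha hb t ht
    rw [map_mul]
    exact mul_ne_zero (ha t ht) (hb t ht)

lemma posMonoid_le (τ : Type) : posMonoid τ ≤ nonZeroDivisors (MvPolynomial τ ℝ) := by
  apply le_nonZeroDivisors_of_noZeroDivisors
  intro h
  exact h (fun _ => 1) (fun _ => one_pos) (map_zero _)

/-- Rational functions regular on the positive orthant. -/
abbrev PosLoc (τ : Type) := Localization (posMonoid τ)

instance (τ : Type) : IsDomain (PosLoc τ) :=
  IsLocalization.isDomain_localization (posMonoid_le τ)

lemma trdeg_posLoc (τ : Type) [Fintype τ] :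
    Algebra.trdeg ℝ (PosLoc τ) = Fintype.card τ := by
  have : FaithfulSMul (MvPolynomial τ ℝ) (PosLoc τ) :=
    (faithfulSMul_iff_algebraMap_injective _ _).2
      (IsLocalization.injective _ (posMonoid_le τ))
  have : Algebra.IsAlgebraic (MvPolynomial τ ℝ) (PosLoc τ) :=
    IsLocalization.isAlgebraic _ (posMonoid τ)
  have h := trdeg_add_eq ℝ (MvPolynomial τ ℝ) (A := PosLoc τ)
  rw [trdeg_eq_zero (R := MvPolynomial τ ℝ) (A := PosLoc τ), add_zero, MvPolynomial.trdeg_of_isDomain] at h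
  rw [← h]
  simp

/-- Evaluation at a point of the positive orthant. -/
noncomputable def evalPos {τ : Type} (t : τ → ℝ) (ht : ∀ i, 0 < t i) : PosLoc τ →ₐ[ℝ] ℝ :=
  IsLocalization.liftAlgHom (M := posMonoid τ) (f := MvPolynomial.aeval t)
    (fun y => (y.2 t ht).isUnit)

lemma exists_relation {τ ι : Type} [Fintype τ] [Fintype ι]
    (hc : Fintype.card τ < Fintype.card ι) (g : ι → PosLoc τ) :
    ∃ f : MvPolynomial ι ℝ, f ≠ 0 ∧ ∀ (t : τ → ℝ) (ht : ∀ i, 0 < t i),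
      MvPolynomial.eval (fun i => evalPos t ht (g i)) f = 0 := by
  have hni : ¬ AlgebraicIndependent ℝ g := by
    intro hg
    have := hg.cardinalMk_le_trdeg
    rw [trdeg_posLoc, Cardinal.mk_fintype, Nat.cast_le] at this
    omega
  rw [algebraicIndependent_iff] at hni
  push Not at hni
  obtain ⟨f, hf, hf0⟩ := hni
  refine ⟨f, hf0, fun t ht => ?_⟩
  have := congrArg (evalPos t ht) hf
  rw [map_zero, MvPolynomial.comp_aeval_apply] at this
  exact this

section
open MvPolynomial

/-- The polynomial `exp (v_j · y + c_j)` in exponential coordinates. -/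
noncomputable def numP {k m : ℕ} (y : Fin k → Bool) (j : Fin m) :
    MvPolynomial (Fin m × Option (Fin k)) ℝ :=
  (∏ i, if y i then X (j, some i) else 1) * X (j, none)

lemma aeval_numP_pos {k m : ℕ} (y : Fin k → Bool) (j : Fin m)
    (t : Fin m × Option (Fin k) → ℝ) (ht : ∀ i, 0 < t i) : 0 < aeval t (numP y j) := by
  rw [numP, map_mul, map_prod, aeval_X]
  refine mul_pos (Finset.prod_pos fun i _ => ?_) (ht _)
  split_ifs <;> simp [ht]

lemma denP_mem {k m : ℕ} (y : Fin k → Bool) (j : Fin m) :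
    1 + numP y j ∈ posMonoid (Fin m × Option (Fin k)) := by
  intro t ht
  have := aeval_numP_pos y j t ht
  rw [map_add, map_one]
  positivity

/-- The sigmoid unit as a rational function. -/
noncomputable def sigP {k m : ℕ} (y : Fin k → Bool) (j : Fin m) :
    PosLoc (Fin m × Option (Fin k)) :=
  IsLocalization.mk' _ (numP y j) (⟨1 + numP y j, denP_mem y j⟩ : posMonoid _)

lemma evalPos_sigP {k m : ℕ} (y : Fin k → Bool) (j : Fin m)
    (t : Fin m × Option (Fin k) → ℝ) (ht : ∀ i, 0 < t i) :
    evalPos t ht (sigP y j) = aeval t (numP y j) / (1 + aeval t (numP y j)) := by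
  have := aeval_numP_pos y j t ht
  rw [evalPos, IsLocalization.liftAlgHom_apply, sigP, IsLocalization.lift_mk'_spec]
  change aeval t (numP y j) = aeval t (1 + numP y j) * _
  rw [map_add, map_one]
  field_simp

/-- Exponential coordinates. -/
noncomputable def expPt {k m : ℕ} (V : Fin m → Fin k → ℝ) (c : Fin m → ℝ) :
    Fin m × Option (Fin k) → ℝ
  | (j, some i) => Real.exp (V j i)
  | (j, none) => Real.exp (c j)

lemma expPt_pos {k m : ℕ} (V : Fin m → Fin k → ℝ) (c : Fin m → ℝ) : ∀ p, 0 < expPt V c p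
  | (_, some _) => Real.exp_pos _
  | (_, none) => Real.exp_pos _

lemma evalPos_sigP_exp {k m : ℕ} (V : Fin m → Fin k → ℝ) (c : Fin m → ℝ)
    (y : Fin k → Bool) (j : Fin m) :
    evalPos (expPt V c) (expPt_pos V c) (sigP y j)
      = sigmoid ((∑ i, V j i * bval (y i)) + c j) := by
  have h : aeval (expPt V c) (numP y j) = Real.exp ((∑ i, V j i * bval (y i)) + c j) := by
    rw [Real.exp_add, Real.exp_sum, numP, map_mul, map_prod, aeval_X]
    congr 1
    refine Finset.prod_congr rfl fun i _ => ?_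
    cases y i <;> simp [bval, expPt]
  rw [evalPos_sigP, h, sigmoid, Real.exp_neg]
  have := Real.exp_pos ((∑ i, V j i * bval (y i)) + c j)
  field_simp
  ring

end

lemma count_bound (k n m : ℕ) (R : (Fin m → Bool) → (Fin n → Bool) → ℝ)
    (h : (fun Q => kcomp R Q) '' closure (Fset k m) = markovKernels k n) :
    2 ^ k * (2 ^ n - 1) ≤ m * (k + 1) := by
  by_contra! hlt
  let x0 : Fin n → Bool := fun _ => false
  let ι := (Fin k → Bool) × {x : Fin n → Bool // x ≠ x0}
  have hc : Fintype.card (Fin m × Option (Fin k)) < Fintype.card ι := by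
    simpa [ι, Fintype.card_subtype_compl] using hlt
  obtain ⟨f, hf0, hf⟩ := exists_relation hc (fun p : ι =>
    ∑ z, (∏ j, (if z j then sigP p.1 j else 1 - sigP p.1 j)) * algebraMap ℝ _ (R z p.2.1))
  have hF : ∀ Q ∈ Fset k m, MvPolynomial.eval (fun p : ι => kcomp R Q p.1 p.2.1) f = 0 := by
    rintro Q ⟨V, c, hQ⟩
    rw [← hf (expPt V c) (expPt_pos V c)]
    congr 2
    funext p
    simp only [kcomp, map_sum, map_mul, map_prod, AlgHom.commutes, hQ]
    refine Finset.sum_congr rfl fun z _ => ?_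
    congr 1
    refine Finset.prod_congr rfl fun j _ => ?_
    split_ifs
    · rw [evalPos_sigP_exp]
    · rw [map_sub, map_one, evalPos_sigP_exp]
  have hcl : ∀ Q ∈ closure (Fset k m),
      MvPolynomial.eval (fun p : ι => kcomp R Q p.1 p.2.1) f = 0 := by
    intro Q hQ
    have hclosed : IsClosed {Q : (Fin k → Bool) → (Fin m → Bool) → ℝ |
        MvPolynomial.eval (fun p : ι => kcomp R Q p.1 p.2.1) f = 0} := by
      refine isClosed_eq ((MvPolynomial.continuous_eval f).comp ?_) continuous_const
      unfold kcomp
      fun_prop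
    exact closure_minimal hF hclosed hQ
  apply hf0
  refine MvPolynomial.funext_set (fun _ => Set.Icc (0:ℝ) (1 / 2 ^ n))
    (fun _ => Set.Icc_infinite (by positivity)) ?_
  intro u hu
  rw [map_zero]
  have hu' : ∀ p, 0 ≤ u p ∧ u p ≤ 1 / 2 ^ n := fun p => hu p (Set.mem_univ _)
  let P : (Fin k → Bool) → (Fin n → Bool) → ℝ := fun y x =>
    if hx : x = x0 then 1 - ∑ x' : {x : Fin n → Bool // x ≠ x0}, u (y, x') else u (y, ⟨x, hx⟩)
  have hP : P ∈ markovKernels k n := by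
    constructor
    · intro y x
      by_cases hx : x = x0
      · simp only [P, hx, dif_pos, sub_nonneg]
        calc ∑ x' : {x : Fin n → Bool // x ≠ x0}, u (y, x')
            ≤ ∑ x' : {x : Fin n → Bool // x ≠ x0}, (1 / 2 ^ n : ℝ) :=
              Finset.sum_le_sum fun x' _ => (hu' _).2
          _ = (Fintype.card {x : Fin n → Bool // x ≠ x0} : ℝ) * (1 / 2 ^ n) := by
              rw [Finset.sum_const, nsmul_eq_mul, Finset.card_univ]
          _ ≤ (2 ^ n : ℝ) * (1 / 2 ^ n) := by
              gcongr
              have := Fintype.card_subtype_le (fun x : Fin n → Bool => x ≠ x0)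
              rw [Fintype.card_fun, Fintype.card_bool, Fintype.card_fin] at this
              exact_mod_cast this
          _ = 1 := by field_simp
      · simp only [P, hx, dif_neg, not_false_eq_true]
        exact (hu' _).1
    · intro y
      rw [Fintype.sum_eq_add_sum_subtype_ne _ x0]
      have : ∀ x' : {x : Fin n → Bool // x ≠ x0}, P y x'.1 = u (y, x') := by
        intro x'
        simp only [P, x'.2, dif_neg, not_false_eq_true]
      simp only [this]
      simp [P]
  rw [← h] at hP
  obtain ⟨Q, hQ, hQP⟩ := hP
  rw [← hcl Q hQ]
  congr 2
  funext p
  have : kcomp R Q = P := hQP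
  rw [this]
  simp only [P, p.2.2, dif_neg, not_false_eq_true]
  rfl

/-- Proposition 3, first part (lower bound, fixed second layer): if some `R` in the closure
of `F_{m,n}` satisfies `{R ∘ Q : Q ∈ closure F_{k,m}} = Δ_{k,n}`, then
`m ≥ ⌈2^k (2^n - 1) / (k+1)⌉`. -/
theorem lower_bound_fixed_second_layer
    (k n m : ℕ) (hk : 1 ≤ k) (hn : 1 ≤ n)
    (h : ∃ R ∈ closure (Fset m n),
      (fun Q => kcomp R Q) '' closure (Fset k m) = markovKernels k n) :
    ⌈(2 ^ k * (2 ^ n - 1) : ℝ) / (k + 1)⌉₊ ≤ m := by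
  obtain ⟨R, _, hR⟩ := h
  have h1 := count_bound k n m R hR
  rw [Nat.ceil_le, div_le_iff₀ (by positivity)]
  have h2 : ((2 ^ k * (2 ^ n - 1) : ℕ) : ℝ) ≤ ((m * (k + 1) : ℕ) : ℝ) := Nat.cast_le.2 h1
  have h3 : 1 ≤ 2 ^ n := Nat.one_le_two_pow
  push_cast [h3] at h2
  exact h2
end

section
/- Let n ≥ 1 and N = 2^n − 1. The deterministic Markov kernel Q ∈ Δ_{N,n} defined by Q(·|z) = δ_{bin_n(l(z))} for all z ∈ {0,1}^N (the row indexed by z is the point measure at the n-bit binary representation of the index of the largest nonzero entry of z) lies in the closure of F_{N,n}. -/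
open Finset

lemma aux_lidx_succ {N : ℕ} (z : Fin (N + 1) → Bool) :
    lidx z = if z (Fin.last N) then N + 1 else lidx (fun i : Fin N => z i.castSucc) := by
  unfold lidx
  apply le_antisymm
  · apply Finset.sup_le
    intro j hj
    simp only [mem_filter, mem_univ, true_and] at hj
    induction j using Fin.lastCases with
    | last => simp [hj]
    | cast i =>
      split_ifs with h
      · have := i.2
        simp only [Fin.val_castSucc]
        omega
      · exact Finset.le_sup (f := fun j : Fin N => (j : ℕ) + 1)
          (by simpa using hj : i ∈ univ.filter (fun i : Fin N => z i.castSucc = true))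
  · split_ifs with h
    · have := Finset.le_sup (f := fun j : Fin (N + 1) => (j : ℕ) + 1)
          (by simpa using h : Fin.last N ∈ univ.filter (fun i => z i = true))
      simpa using this
    · apply Finset.sup_le
      intro i hi
      simp only [mem_filter, mem_univ, true_and] at hi
      have := Finset.le_sup (f := fun j : Fin (N + 1) => (j : ℕ) + 1)
          (by simpa using hi : i.castSucc ∈ univ.filter (fun i => z i = true))
      simpa using this

/-- Sign of a bit. -/
def sgnBit (b : Bool) : ℝ := if b then 1 else -1

lemma aux_margin (f : ℕ → Bool) (hf : f 0 = false) (N : ℕ) (z : Fin N → Bool) :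
    |(∑ i : Fin N, sgnBit (f (i + 1)) * 2 ^ ((i : ℕ) + 1) * bval (z i)) + (-1)|
        ≤ 2 ^ (N + 1) - 1 ∧
    1 ≤ sgnBit (f (lidx z)) *
      ((∑ i : Fin N, sgnBit (f (i + 1)) * 2 ^ ((i : ℕ) + 1) * bval (z i)) + (-1)) := by
  induction N with
  | zero => simp [lidx, hf, sgnBit]; norm_num
  | succ N ih =>
    obtain ⟨h1, h2⟩ := ih (fun i => z i.castSucc)
    rw [aux_lidx_succ, Fin.sum_univ_castSucc]
    simp only [Fin.val_castSucc, Fin.val_last] at *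
    generalize (∑ i : Fin N, sgnBit (f (i + 1)) * 2 ^ ((i : ℕ) + 1) * bval (z i.castSucc)) = S at *
    have hp : (0 : ℝ) < 2 ^ (N + 1) := by positivity
    rw [pow_succ (2 : ℝ) (N + 1)]
    rw [abs_le] at *
    obtain ⟨h1, h3⟩ := h1
    cases hz : z (Fin.last N)
    · simp only [bval, Bool.false_eq_true, if_false, mul_zero, add_zero]
      exact ⟨⟨by linarith, by linarith⟩, h2⟩
    · cases hb : f (N + 1) <;> simp [bval, sgnBit, hb] <;>
        refine ⟨⟨?_, ?_⟩, ?_⟩ <;> linarith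

lemma aux_sigmoid_pos {a : ℝ} (ha : 0 < a) :
    Filter.Tendsto (fun t : ℝ => sigmoid (t * a)) Filter.atTop (nhds 1) := by
  have h : Filter.Tendsto (fun t : ℝ => Real.exp (-(t * a))) Filter.atTop (nhds 0) :=
    Real.tendsto_exp_neg_atTop_nhds_zero.comp (Filter.tendsto_id.atTop_mul_const ha)
  have h2 := (h.const_add 1).inv₀ (by norm_num)
  simpa [sigmoid] using h2

lemma aux_sigmoid_neg {a : ℝ} (ha : a < 0) :
    Filter.Tendsto (fun t : ℝ => sigmoid (t * a)) Filter.atTop (nhds 0) := by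
  have h : Filter.Tendsto (fun t : ℝ => 1 - sigmoid (t * (-a))) Filter.atTop (nhds 0) := by
    simpa using (aux_sigmoid_pos (neg_pos.2 ha)).const_sub 1
  refine h.congr fun t => ?_
  have e : Real.exp (t * a) * Real.exp (-(t * a)) = 1 := by rw [← Real.exp_add]; simp
  have p1 := Real.exp_pos (t * a)
  have p2 := Real.exp_pos (-(t * a))
  simp only [sigmoid, mul_neg, neg_neg]
  field_simp
  linarith

/-- Lemma 2: for `N = 2^n - 1`, the deterministic kernel `Q(·|z) = δ_{bin_n(l(z))}`
lies in the closure of `F_{N,n}`. -/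
theorem largest_entry_indicator_kernel_mem_closure (n : ℕ) (hn : 1 ≤ n) :
    (fun (z : Fin (2 ^ n - 1) → Bool) => deltaAt (binVec n (lidx z)))
      ∈ closure (Fset (2 ^ n - 1) n) := by
  let A : (Fin (2 ^ n - 1) → Bool) → Fin n → ℝ := fun y j =>
    (∑ i : Fin (2 ^ n - 1),
      sgnBit (Nat.testBit ((i : ℕ) + 1) j) * 2 ^ ((i : ℕ) + 1) * bval (y i)) + (-1)
  refine mem_closure_of_tendsto (b := Filter.atTop)
    (f := fun t : ℝ => fun y z => ∏ j : Fin n,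
      (if z j then sigmoid (t * A y j) else 1 - sigmoid (t * A y j))) ?_ ?_
  · rw [tendsto_pi_nhds]
    intro y
    rw [tendsto_pi_nhds]
    intro z
    have hd : deltaAt (binVec n (lidx y)) z
        = ∏ j : Fin n, (if z j = binVec n (lidx y) j then (1 : ℝ) else 0) := by
      rw [Finset.prod_ite_zero]
      simp [deltaAt, funext_iff]
    rw [hd]
    refine tendsto_finsetProd _ fun j _ => ?_
    have hm : 1 ≤ sgnBit (binVec n (lidx y) j) * A y j :=
      (aux_margin (fun l => Nat.testBit l j) (by simp) _ y).2
    cases hb : binVec n (lidx y) j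
    · have ha : A y j < 0 := by
        simp only [sgnBit, hb, Bool.false_eq_true, if_false] at hm
        linarith
      have := aux_sigmoid_neg ha
      cases z j
      · simpa using this.const_sub 1
      · simpa using this
    · have ha : 0 < A y j := by
        simp only [sgnBit, hb, if_true] at hm
        linarith
      have := aux_sigmoid_pos ha
      cases z j
      · simpa using this.const_sub 1
      · simpa using this
  · refine Filter.Eventually.of_forall fun t => ?_
    refine ⟨fun j i => t * (sgnBit (Nat.testBit ((i : ℕ) + 1) j) * 2 ^ ((i : ℕ) + 1)),
      fun _ => t * (-1), fun y z => ?_⟩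
    refine Finset.prod_congr rfl fun j _ => ?_
    have : t * A y j = (∑ i : Fin (2 ^ n - 1),
      t * (sgnBit (Nat.testBit ((i : ℕ) + 1) j) * 2 ^ ((i : ℕ) + 1)) * bval (y i))
        + t * (-1) := by
      simp only [A, mul_add, Finset.mul_sum, mul_assoc]
    rw [this]
end

section
/- Let n ≥ 1, N = 2^n − 1, and let Q ∈ Δ_{N,n} be the deterministic kernel Q(·|z) = δ_{bin_n(l(z))} for all z ∈ {0,1}^N. Then { p^⊤Q : p ∈ E_N } = Δ_n^+, the set of strictly positive probability distributions on {0,1}^n. -/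
open Finset

theorem aux_lidx_le {N : ℕ} (z : Fin N → Bool) (k : ℕ) :
    lidx z ≤ k ↔ ∀ j, z j = true → (j : ℕ) + 1 ≤ k := by
  unfold lidx
  simp [Finset.sup_le_iff]

theorem aux_lidx_le_N {N : ℕ} (z : Fin N → Bool) : lidx z ≤ N := by
  rw [aux_lidx_le]
  intro j _
  exact j.2

/-- Cumulative distribution function of `lidx` under a product measure. -/
theorem aux_cdf {N : ℕ} (q : Fin N → ℝ) (k : ℕ) :
    ∑ z : Fin N → Bool, (if lidx z ≤ k then ∏ j, (if z j then 1 - q j else q j) else 0)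
      = ∏ j : Fin N, (if k ≤ (j : ℕ) then q j else 1) := by
  have h1 : ∀ j : Fin N, (if k ≤ (j : ℕ) then q j else 1) =
      ∑ b : Bool, (if b then (if k ≤ (j : ℕ) then 0 else 1 - q j) else q j) := by
    intro j
    rw [Fintype.sum_bool]
    by_cases h : k ≤ (j : ℕ) <;> simp [h]
  rw [Finset.prod_congr rfl (fun j _ => h1 j), Fintype.prod_sum]
  refine Finset.sum_congr rfl (fun z _ => ?_)
  by_cases h : lidx z ≤ k
  · rw [if_pos h]
    rw [aux_lidx_le] at h
    refine Finset.prod_congr rfl (fun j _ => ?_)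
    by_cases hz : z j = true
    · have := h j hz
      have h2 : ¬ k ≤ (j : ℕ) := by omega
      simp [hz, h2]
    · simp [hz]
  · rw [if_neg h]
    rw [aux_lidx_le] at h
    push Not at h
    obtain ⟨j, hz, hj⟩ := h
    symm
    apply Finset.prod_eq_zero (Finset.mem_univ j)
    have h2 : k ≤ (j : ℕ) := by omega
    simp [hz, h2]

theorem aux_total {N : ℕ} (q : Fin N → ℝ) :
    ∑ z : Fin N → Bool, ∏ j, (if z j then 1 - q j else q j) = 1 := by
  have h := aux_cdf q N
  simp only [aux_lidx_le_N, if_true] at h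
  rw [h]
  apply Finset.prod_eq_one
  intro j _
  have := j.2
  rw [if_neg (by omega)]

theorem aux_telescope (S : ℕ → ℝ) (hS : ∀ k, 0 < S k) (k : ℕ) (N : ℕ) (hk : k ≤ N) :
    ∏ j : Fin N, (if k ≤ (j : ℕ) then S j / S (j + 1) else 1) = S k / S N := by
  induction N with
  | zero =>
    obtain rfl : k = 0 := by omega
    simp [(hS 0).ne']
  | succ N ih =>
    rw [Fin.prod_univ_castSucc]
    simp only [Fin.val_castSucc, Fin.val_last]
    have h1 := (hS N).ne'
    have h2 := (hS (N+1)).ne'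
    by_cases h : k ≤ N
    · rw [ih h, if_pos h]
      field_simp
    · obtain rfl : k = N + 1 := by omega
      rw [if_neg h, div_self h2, mul_one]
      apply Finset.prod_eq_one
      intro j _
      have := j.2
      rw [if_neg (by omega)]

theorem aux_bin_bij (n : ℕ) :
    Function.Bijective (fun l : Fin (2 ^ n) => binVec n (l : ℕ)) := by
  rw [Fintype.bijective_iff_injective_and_card]
  refine ⟨?_, by simp⟩
  intro a b h
  apply Fin.ext
  apply Nat.eq_of_testBit_eq
  intro i
  by_cases hi : i < n
  · exact congrFun h ⟨i, hi⟩
  · have hp : 2 ^ n ≤ 2 ^ i := Nat.pow_le_pow_right (by norm_num) (by omega)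
    rw [Nat.testBit_lt_two_pow (lt_of_lt_of_le a.2 hp),
      Nat.testBit_lt_two_pow (lt_of_lt_of_le b.2 hp)]

theorem aux_mix {n : ℕ} (p : (Fin (2 ^ n - 1) → Bool) → ℝ) (l : ℕ) (hl : l < 2 ^ n) :
    mix p (fun z => deltaAt (binVec n (lidx z))) (binVec n l)
      = ∑ z, if lidx z = l then p z else 0 := by
  unfold mix deltaAt
  refine Finset.sum_congr rfl (fun z _ => ?_)
  have hz : lidx z < 2 ^ n := by
    have := aux_lidx_le_N z
    omega
  have : (binVec n l = binVec n (lidx z)) ↔ lidx z = l := by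
    constructor
    · intro h
      have := (aux_bin_bij n).1 (a₁ := ⟨l, hl⟩) (a₂ := ⟨lidx z, hz⟩) h
      simpa using (congrArg Fin.val this).symm
    · intro h
      rw [h]
  simp [this]

theorem aux_exists_lidx {N : ℕ} (l : ℕ) (hl : l ≤ N) : ∃ z : Fin N → Bool, lidx z = l := by
  refine ⟨fun j => decide ((j : ℕ) + 1 = l), le_antisymm ?_ ?_⟩
  · rw [aux_lidx_le]
    intro j hj
    exact (of_decide_eq_true hj).le
  · rcases Nat.eq_zero_or_pos l with h | h
    · omega
    · have := (aux_lidx_le (N := N) (fun j => decide ((j : ℕ) + 1 = l)) _).1 le_rfl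
        ⟨l - 1, by omega⟩ (by simp; omega)
      simp only at this
      omega

/-- Proposition 5: for `N = 2^n - 1` and `Q` the deterministic kernel
`Q(·|z) = δ_{bin_n(l(z))}`, the image of `E_N` under `p ↦ p^⊤Q` is exactly `Δ_n^+`. -/
theorem image_of_products_is_positive_simplex (n : ℕ) (hn : 1 ≤ n) :
    (fun p => mix p (fun (z : Fin (2 ^ n - 1) → Bool) => deltaAt (binVec n (lidx z))))
      '' Eset (2 ^ n - 1) = simplexPos n := by
  have hpow : 0 < 2 ^ n := by positivity
  ext r
  constructor
  · rintro ⟨p, ⟨q, hq, hp⟩, rfl⟩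
    have hpos : ∀ z, 0 < p z := by
      intro z
      rw [hp]
      apply Finset.prod_pos
      intro j _
      have h1 := (hq j).1
      have h2 := (hq j).2
      split_ifs <;> linarith
    refine ⟨?_, ?_⟩
    · intro x
      obtain ⟨l, rfl⟩ := (aux_bin_bij n).2 x
      show 0 < mix p (fun z => deltaAt (binVec n (lidx z))) (binVec n l)
      rw [aux_mix p l l.2]
      obtain ⟨z, hz⟩ := aux_exists_lidx (N := 2 ^ n - 1) (l : ℕ) (by have := l.2; omega)
      apply Finset.sum_pos'
      · intro z _
        split_ifs
        · exact (hpos z).le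
        · exact le_rfl
      · exact ⟨z, Finset.mem_univ z, by rw [if_pos hz]; exact hpos z⟩
    · show ∑ x, ∑ z, p z * deltaAt (binVec n (lidx z)) x = 1
      rw [Finset.sum_comm]
      simp only [deltaAt, mul_ite, mul_one, mul_zero, Finset.sum_ite_eq', Finset.mem_univ,
        if_true]
      simp only [hp]
      exact aux_total q
  · rintro ⟨hr, hsum⟩
    let S : ℕ → ℝ := fun k => ∑ l ∈ Finset.range (k + 1), r (binVec n l)
    have hS : ∀ k, 0 < S k := fun k =>
      Finset.sum_pos (fun l _ => hr _) ⟨0, by simp⟩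
    have hSs : ∀ k, S (k + 1) = S k + r (binVec n (k + 1)) := fun k =>
      Finset.sum_range_succ _ _
    have hS0 : S 0 = r (binVec n 0) := by simp [S]
    have hSN : S (2 ^ n - 1) = 1 := by
      have e : 2 ^ n - 1 + 1 = 2 ^ n := by omega
      show ∑ l ∈ Finset.range (2 ^ n - 1 + 1), r (binVec n l) = 1
      rw [e, Finset.sum_range, ← hsum]
      exact (aux_bin_bij n).sum_comp r
    let q : Fin (2 ^ n - 1) → ℝ := fun j => S j / S (j + 1)
    let p : (Fin (2 ^ n - 1) → Bool) → ℝ := fun z => ∏ j, (if z j then 1 - q j else q j)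
    have hG : ∀ k, k ≤ 2 ^ n - 1 → ∑ z, (if lidx z ≤ k then p z else 0) = S k := by
      intro k hk
      have h1 := aux_cdf q k
      have h2 := aux_telescope S hS k _ hk
      rw [hSN, div_one] at h2
      exact h1.trans h2
    refine ⟨p, ⟨q, ?_, fun z => rfl⟩, ?_⟩
    · intro j
      refine ⟨div_pos (hS _) (hS _), ?_⟩
      rw [div_lt_one (hS _), hSs]
      linarith [hr (binVec n (j + 1))]
    · funext x
      obtain ⟨l, rfl⟩ := (aux_bin_bij n).2 x
      show mix p (fun z => deltaAt (binVec n (lidx z))) (binVec n l) = r (binVec n l)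
      rw [aux_mix p l l.2]
      obtain ⟨l, hl⟩ := l
      show ∑ z, (if lidx z = l then p z else 0) = r (binVec n l)
      cases l with
      | zero =>
        rw [← hS0, ← hG 0 (by omega)]
        simp
      | succ k =>
        have h1 := hG k (by omega)
        have h2 := hG (k + 1) (by omega)
        have h3 : r (binVec n (k + 1)) = S (k + 1) - S k := by rw [hSs]; ring
        rw [h3, ← h1, ← h2, ← Finset.sum_sub_distrib]
        refine Finset.sum_congr rfl (fun z _ => ?_)
        by_cases ha : lidx z ≤ k
        · rw [if_pos ha, if_neg (by omega), if_pos (by omega), sub_self]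
        · by_cases hb : lidx z = k + 1
          · rw [if_pos hb, if_pos (by omega), if_neg ha, sub_zero]
          · rw [if_neg hb, if_neg (by omega), if_neg ha, sub_zero]
end
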